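/- arXiv:2309.00963 — 2 statements merged into one kernel-verified Lean document; each statement's English description precedes it below -/
import Mathlib

section
/- Let ℓ ∈ ℤ, let V : ℝ → ℝ be a continuous bounded function with V ≥ 1, and let ω ⊂ [ℓ, ℓ+1] be a measurable set with |ω| > 0. Then there exist constants α ∈ (0,1) and C > 0, depending only on V and |ω|, such that every real-valued H²_loc solution φ of −Δφ(x,y) + V(x)φ(x,y) = 0 with ∂_yφ(x,0) = 0 satisfies ‖φ‖_{L²(D₁ℓ)} ≤ C ‖φ(·,0)‖_{L²(ω)}^α (sup_{D₂ℓ}|φ|)^{1−α}, where D₁ℓ = [ℓ, ℓ+1] × [−1/2, 1/2] and D₂ℓ = [ℓ−1, ℓ+2] × [−3/2, 3/2]. -/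
open MeasureTheory Set

/-! For a bounded nonnegative solution `b` of the Riccati equation `∂ₓb + b² = V`, the Neumann
condition makes `f = φ + i ∫₀^y (∂ₓφ - b φ) dt` a solution of the Bers–Vekua equation
`2 ∂f/∂z̄ = b f̄`, and `f = φ` on the real axis. By the similarity principle `f` is
comparable on a disc to a holomorphic function `G`, so everything reduces to the propagation of
smallness for `G` from a set `E ⊆ ℝ` of positive measure: Lagrange interpolation of `G` at `n + 1`
separated points of `E`, with the remainder controlled by Blaschke factors, gives
`|G| ≤ δ Aⁿ + S θⁿ` with `θ < 1`, and optimizing in `n` gives the Hölder exponent. Chebyshev's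
inequality passes from the `L²` norm on `ω` to a bound on a large subset of `ω`. -/

section SeparatedNodes

lemma exists_mem_lt_volume_inter_Ici {E : Set ℝ} (hE : BddBelow E) {t d : ℝ} (ht : 0 ≤ t)
    (hd : 0 ≤ d) (hvol : ENNReal.ofReal (t + d) < volume E) :
    ∃ x₀ ∈ E, ENNReal.ofReal t < volume (E ∩ Ici (x₀ + d)) := by
  have hne : E.Nonempty := nonempty_of_measure_ne_zero (ne_bot_of_gt hvol)
  obtain ⟨ε, hε, hlt⟩ := ENNReal.lt_iff_exists_add_pos_lt.1 hvol
  obtain ⟨x₀, hx₀, hx₀ε⟩ : ∃ x₀ ∈ E, x₀ < sInf E + ε :=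
    exists_lt_of_csInf_lt hne (lt_add_of_pos_right _ hε)
  refine ⟨x₀, hx₀, ?_⟩
  by_contra! hle
  have hcover : E ⊆ (E ∩ Ici (x₀ + d)) ∪ Ico (sInf E) (x₀ + d) := fun y hy =>
    (le_or_gt (x₀ + d) y).imp (fun h => ⟨hy, h⟩) (fun h => ⟨csInf_le hE hy, h⟩)
  refine hlt.not_ge ?_
  calc volume E ≤ volume (E ∩ Ici (x₀ + d)) + volume (Ico (sInf E) (x₀ + d)) :=
        (measure_mono hcover).trans (measure_union_le _ _)
    _ ≤ ENNReal.ofReal t + ENNReal.ofReal (d + ε) := by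
        rw [Real.volume_Ico]
        gcongr
        linarith
    _ = ENNReal.ofReal (t + d) + ε := by
        rw [ENNReal.ofReal_add hd ε.coe_nonneg, ENNReal.ofReal_add ht hd, add_assoc,
          ENNReal.ofReal_coe_nnreal]

lemma exists_separated_points_of_lt_volume {d : ℝ} (hd : 0 ≤ d) (n : ℕ) {E : Set ℝ}
    (hE : BddBelow E) (hvol : ENNReal.ofReal (n * d) < volume E) :
    ∃ x : ℕ → ℝ, (∀ i ≤ n, x i ∈ E) ∧ ∀ i < n, x i + d ≤ x (i + 1) := by
  induction n generalizing E with
  | zero =>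
    obtain ⟨a, ha⟩ := nonempty_of_measure_ne_zero (ne_bot_of_gt hvol)
    exact ⟨fun _ => a, fun _ _ => ha, fun i hi => absurd hi i.not_lt_zero⟩
  | succ n ih =>
    rw [Nat.cast_succ, add_one_mul] at hvol
    obtain ⟨x₀, hx₀, hvol'⟩ := exists_mem_lt_volume_inter_Ici hE (by positivity) hd hvol
    obtain ⟨x, hxE, hx⟩ := ih (hE.mono inter_subset_left) hvol'
    refine ⟨fun k => Nat.casesOn k x₀ x, fun i hi => ?_, fun i hi => ?_⟩
    · cases i with
      | zero => exact hx₀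
      | succ i => exact (hxE i (by lia)).1
    · cases i with
      | zero => exact (hxE 0 n.zero_le).2
      | succ i => exact hx i (by lia)

lemma abs_sub_mul_le_abs_sub_of_add_le {x : ℕ → ℝ} {d : ℝ} {n : ℕ}
    (hx : ∀ i < n, x i + d ≤ x (i + 1)) {i j : ℕ} (hi : i ≤ n) (hj : j ≤ n) :
    |(i : ℝ) - j| * d ≤ |x i - x j| := by
  have key : ∀ i j, i ≤ j → j ≤ n → ((j : ℝ) - i) * d ≤ x j - x i := by
    intro i j hij hj
    induction j, hij using Nat.le_induction with
    | base => simp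
    | succ j _ ih =>
      push_cast
      linarith [ih (by lia), hx j (by lia)]
  wlog hij : i ≤ j generalizing i j
  · rw [abs_sub_comm, abs_sub_comm (x i)]
    exact this hj hi (by lia)
  · have hij' : (i : ℝ) ≤ j := mod_cast hij
    rw [abs_sub_comm, abs_sub_comm (x i), abs_of_nonneg (sub_nonneg.2 hij')]
    exact (key i j hij hj).trans (le_abs_self _)

end SeparatedNodes

section LagrangeInterpolation

open Finset Polynomial
open scoped Nat

lemma prod_erase_abs_sub_eq_factorial_mul_factorial {n i : ℕ} (hi : i ≤ n) :
    ∏ j ∈ (range (n + 1)).erase i, |(i : ℝ) - j| = i ! * (n - i)! := by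
  have hsplit : (range (n + 1)).erase i = range i ∪ Finset.Ico (i + 1) (n + 1) := by
    ext j
    simp only [mem_erase, Finset.mem_range, Finset.mem_union, Finset.mem_Ico]
    lia
  have hdisj : Disjoint (range i) (Finset.Ico (i + 1) (n + 1)) :=
    Finset.disjoint_left.2 fun j => by
      simp only [Finset.mem_range, Finset.mem_Ico]
      lia
  have hlow : ∏ j ∈ range i, |(i : ℝ) - j| = i ! := by
    rw [← prod_range_reflect, ← prod_range_add_one_eq_factorial, Nat.cast_prod]
    refine prod_congr rfl fun j hj => ?_
    rw [← Nat.cast_sub (by lia), Nat.abs_cast]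
    congr 1
    have := Finset.mem_range.1 hj
    lia
  have hhigh : ∏ j ∈ Finset.Ico (i + 1) (n + 1), |(i : ℝ) - j| = (n - i)! := by
    rw [prod_Ico_eq_prod_range, ← prod_range_add_one_eq_factorial, Nat.cast_prod,
      Nat.add_sub_add_right]
    refine prod_congr rfl fun j _ => ?_
    rw [abs_sub_comm, ← Nat.cast_sub (by lia), Nat.abs_cast]
    congr 1
    lia
  rw [hsplit, prod_union hdisj, hlow, hhigh]

variable {𝕜 : Type*} [NormedField 𝕜] {n : ℕ} {v : ℕ → 𝕜} {d ρ : ℝ} {w : 𝕜}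

lemma norm_eval_lagrange_basis_le (hd : 0 < d)
    (hv : ∀ i ≤ n, ∀ j ≤ n, |(i : ℝ) - j| * d ≤ ‖v i - v j‖)
    (hw : ∀ j ≤ n, ‖w - v j‖ ≤ ρ) {i : ℕ} (hi : i ≤ n) :
    ‖(Lagrange.basis (range (n + 1)) v i).eval w‖ ≤ (ρ / d) ^ n / (i ! * (n - i)!) := by
  have hfactor : ∀ j ∈ (range (n + 1)).erase i,
      ‖(Lagrange.basisDivisor (v i) (v j)).eval w‖ ≤ ρ / d / |(i : ℝ) - j| := by
    intro j hj
    obtain ⟨hji, hj⟩ := Finset.mem_erase.1 hj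
    have hjn : j ≤ n := by simpa only [Finset.mem_range, Nat.lt_succ_iff] using hj
    have hij : 0 < |(i : ℝ) - j| := abs_pos.2 (sub_ne_zero.2 (mod_cast hji.symm))
    rw [Lagrange.basisDivisor, eval_mul, eval_C, eval_sub, eval_X, eval_C, norm_mul, norm_inv,
      inv_mul_eq_div, div_div, mul_comm d]
    exact div_le_div₀ ((norm_nonneg _).trans (hw j hjn)) (hw j hjn) (by positivity)
      (hv i hi j hjn)
  have hcard : #((range (n + 1)).erase i) = n := by
    rw [card_erase_of_mem (Finset.mem_range.2 (by lia)), card_range, Nat.add_sub_cancel]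
  rw [Lagrange.basis, eval_prod, norm_prod]
  refine (prod_le_prod (fun _ _ => norm_nonneg _) hfactor).trans_eq ?_
  rw [prod_div_distrib, prod_const, hcard, prod_erase_abs_sub_eq_factorial_mul_factorial hi]

lemma injOn_range_of_abs_sub_mul_le (hd : 0 < d)
    (hv : ∀ i ≤ n, ∀ j ≤ n, |(i : ℝ) - j| * d ≤ ‖v i - v j‖) : InjOn v (Finset.range (n + 1)) := by
  intro i hi j hj hij
  simp only [coe_range, Set.mem_Iio, Nat.lt_succ_iff] at hi hj
  by_contra hne
  have h := hv i hi j hj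
  rw [hij, sub_self, norm_zero] at h
  exact h.not_gt (mul_pos (abs_pos.2 (sub_ne_zero.2 (mod_cast hne))) hd)

lemma norm_eval_lagrange_interpolate_le {y : ℕ → 𝕜} {δ : ℝ} (hd : 0 < d)
    (hv : ∀ i ≤ n, ∀ j ≤ n, |(i : ℝ) - j| * d ≤ ‖v i - v j‖)
    (hw : ∀ j ≤ n, ‖w - v j‖ ≤ ρ) (hy : ∀ i ≤ n, ‖y i‖ ≤ δ) :
    ‖(Lagrange.interpolate (range (n + 1)) v y).eval w‖ ≤ δ * ((2 * ρ / d) ^ n / n !) := by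
  have hδ : 0 ≤ δ := (norm_nonneg _).trans (hy 0 n.zero_le)
  have hsum : ∑ i ∈ range (n + 1), (ρ / d) ^ n / (i ! * (n - i)!) = (2 * ρ / d) ^ n / n ! := by
    have hchoose : ∀ i ∈ range (n + 1),
        (ρ / d) ^ n / (i ! * (n - i)!) = (ρ / d) ^ n / n ! * n.choose i := by
      intro i hi
      rw [Nat.cast_choose ℝ (by simpa only [Finset.mem_range, Nat.lt_succ_iff] using hi)]
      field_simp
    rw [sum_congr rfl hchoose, ← mul_sum, ← Nat.cast_sum, Nat.sum_range_choose, mul_div_assoc,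
      mul_pow]
    push_cast
    ring
  rw [Lagrange.interpolate_apply, eval_finsetSum, ← hsum, mul_sum]
  refine norm_sum_le_of_le _ fun i hi => ?_
  have hi : i ≤ n := by simpa only [Finset.mem_range, Nat.lt_succ_iff] using hi
  rw [eval_mul, eval_C, norm_mul]
  exact mul_le_mul (hy i hi) (norm_eval_lagrange_basis_le hd hv hw hi) (norm_nonneg _) hδ

end LagrangeInterpolation

section Blaschke

open Complex Metric
open scoped ComplexConjugate

variable {R r B : ℝ} {a z : ℂ}

lemma sub_conj_mul_ne_zero (ha : a ∈ ball (0 : ℂ) R) (hz : z ∈ closedBall (0 : ℂ) R) :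
    (R : ℂ) ^ 2 - conj a * z ≠ 0 := by
  rw [mem_ball_zero_iff] at ha
  rw [mem_closedBall_zero_iff] at hz
  have hlt : ‖a‖ * ‖z‖ < R ^ 2 := by nlinarith [norm_nonneg a, norm_nonneg z]
  intro h
  have := congrArg norm (sub_eq_zero.1 h)
  rw [norm_pow, norm_mul, RCLike.norm_conj, norm_real, Real.norm_eq_abs, sq_abs] at this
  exact hlt.ne' this

lemma norm_dslope_mul_eq_of_mem_sphere {H : ℂ → ℂ} (ha : a ∈ ball (0 : ℂ) R) (hHa : H a = 0)
    (hz : z ∈ sphere (0 : ℂ) R) :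
    ‖dslope H a z * ((R ^ 2 - conj a * z) / R)‖ = ‖H z‖ := by
  have hza : z - a ≠ 0 := sub_ne_zero.2 fun h => (mem_ball_zero_iff.1 ha).ne
    (h ▸ mem_sphere_zero_iff_norm.1 hz)
  have hfactor : dslope H a z * ((R ^ 2 - conj a * z) / R) = H z * canonicalFactor R a z := by
    have h := sub_smul_dslope H a z
    rw [hHa, sub_zero, smul_eq_mul] at h
    rw [← h, canonicalFactor_apply]
    field_simp
  rw [hfactor, norm_mul, norm_canonicalFactor_eval_circle_eq_one ha hz, mul_one]

lemma eq_dslope_mul_mul_inv_canonicalFactor {H : ℂ → ℂ} (ha : a ∈ ball (0 : ℂ) R)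
    (hHa : H a = 0) (hz : z ∈ closedBall (0 : ℂ) R) :
    H z = dslope H a z * ((R ^ 2 - conj a * z) / R) * (canonicalFactor R a z)⁻¹ := by
  have hR : (R : ℂ) ≠ 0 := ofReal_ne_zero.2 (pos_of_mem_ball ha).ne'
  have h := sub_smul_dslope H a z
  rw [hHa, sub_zero, smul_eq_mul] at h
  have hne := sub_conj_mul_ne_zero ha hz
  rw [mul_comm (conj a)] at hne
  rw [canonicalFactor_apply, inv_div, ← h]
  field_simp

theorem norm_le_mul_prod_inv_canonicalFactor (s : Finset ℂ) {H : ℂ → ℂ}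
    (hH : DiffContOnCl ℂ H (ball 0 R)) (hB : ∀ z ∈ sphere (0 : ℂ) R, ‖H z‖ ≤ B)
    (hs : ∀ a ∈ s, a ∈ ball (0 : ℂ) R) (h0 : ∀ a ∈ s, H a = 0)
    (hR : 0 < R) (hz : z ∈ closedBall (0 : ℂ) R) :
    ‖H z‖ ≤ B * ∏ a ∈ s, ‖(canonicalFactor R a z)⁻¹‖ := by
  induction s using Finset.induction_on generalizing H with
  | empty =>
    rw [Finset.prod_empty, mul_one]
    refine norm_le_of_forall_mem_frontier_norm_le isBounded_ball hH ?_
      (by rwa [closure_ball _ hR.ne'])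
    rwa [frontier_ball _ hR.ne']
  | insert a s has ih =>
    have ha := hs a (Finset.mem_insert_self a s)
    have hHa := h0 a (Finset.mem_insert_self a s)
    have hnhds : ball 0 R ∈ nhds a := isOpen_ball.mem_nhds ha
    have hdslope : DiffContOnCl ℂ (dslope H a) (ball 0 R) :=
      ⟨(differentiableOn_dslope hnhds).2 hH.differentiableOn,
        (continuousOn_dslope (Filter.mem_of_superset hnhds subset_closure)).2
          ⟨hH.continuousOn, hH.differentiableAt isOpen_ball ha⟩⟩
    have hquot : DiffContOnCl ℂ (fun w => dslope H a w * ((R ^ 2 - conj a * w) / R)) (ball 0 R) :=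
      hdslope.smul (Differentiable.diffContOnCl (by fun_prop))
    have hvanish : ∀ b ∈ s, dslope H a b * ((R ^ 2 - conj a * b) / R) = 0 := by
      intro b hb
      rw [dslope_of_ne _ (ne_of_mem_of_not_mem hb has), slope_def_field, hHa,
        h0 b (Finset.mem_insert_of_mem hb), sub_zero, zero_div, zero_mul]
    have hquot_le := ih hquot (fun w hw => (norm_dslope_mul_eq_of_mem_sphere ha hHa hw).trans_le
      (hB w hw)) (fun b hb => hs b (Finset.mem_insert_of_mem hb)) hvanish
    rw [Finset.prod_insert has, mul_left_comm, mul_comm, eq_dslope_mul_mul_inv_canonicalFactor ha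
      hHa hz, norm_mul]
    gcongr

lemma norm_inv_canonicalFactor_le (hR : 0 < R) (hrR : r < R) (ha : ‖a‖ ≤ r) (hz : ‖z‖ ≤ r) :
    ‖(canonicalFactor R a z)⁻¹‖ ≤ 2 * R * r / (R ^ 2 + r ^ 2) := by
  have hr : 0 ≤ r := (norm_nonneg a).trans ha
  have hpos : 0 < ‖(R : ℂ) ^ 2 - conj a * z‖ := norm_pos_iff.2 <| sub_conj_mul_ne_zero
    (mem_ball_zero_iff.2 (ha.trans_lt hrR)) (mem_closedBall_zero_iff.2 (hz.trans hrR.le))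
  have hden : ‖(R : ℂ) ^ 2 - conj a * z‖ ≤ R ^ 2 + r ^ 2 := by
    refine (norm_sub_le _ _).trans (add_le_add (by simp) ?_)
    rw [norm_mul, RCLike.norm_conj, sq]
    gcongr
  have hidentity : ‖(R : ℂ) ^ 2 - conj a * z‖ ^ 2 - (R * ‖z - a‖) ^ 2 =
      (R ^ 2 - ‖a‖ ^ 2) * (R ^ 2 - ‖z‖ ^ 2) := by
    rw [mul_pow, ← normSq_eq_norm_sq, ← normSq_eq_norm_sq, ← normSq_eq_norm_sq,
      ← normSq_eq_norm_sq, ← ofReal_pow]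
    simp only [normSq_apply, sub_re, sub_im, mul_re, mul_im, conj_re, conj_im, ofReal_re,
      ofReal_im]
    ring
  have hdefect : (R ^ 2 - r ^ 2) * (R ^ 2 - r ^ 2) ≤ (R ^ 2 - ‖a‖ ^ 2) * (R ^ 2 - ‖z‖ ^ 2) := by
    have : 0 ≤ R ^ 2 - r ^ 2 := by nlinarith
    exact mul_le_mul (by gcongr) (by gcongr) this (this.trans (by gcongr))
  rw [canonicalFactor_apply, inv_div, norm_div, norm_mul, norm_real, Real.norm_of_nonneg hR.le,
    div_le_div_iff₀ hpos (by positivity)]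
  refine le_of_sq_le_sq ?_ (by positivity)
  have h1 : ‖(R : ℂ) ^ 2 - conj a * z‖ ^ 2 * (R ^ 2 - r ^ 2) ^ 2 ≤
      (R ^ 2 + r ^ 2) ^ 2 * (‖(R : ℂ) ^ 2 - conj a * z‖ ^ 2 - (R * ‖z - a‖) ^ 2) := by
    rw [hidentity]
    gcongr
    rwa [sq]
  nlinarith

end Blaschke

section TwoConstants

open Complex Metric
open scoped Nat

lemma le_rpow_mul_rpow_of_forall_pow {A θ X S δ : ℝ} (hA : 1 < A) (hθ0 : 0 < θ) (hθ1 : θ < 1)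
    (hδ : 0 < δ) (hδS : δ ≤ S) (hX : ∀ n : ℕ, X ≤ δ * A ^ n + S * θ ^ n) :
    X ≤ (1 + θ⁻¹) * δ ^ (-Real.log θ / (Real.log A - Real.log θ)) *
      S ^ (1 - -Real.log θ / (Real.log A - Real.log θ)) := by
  have hS : 0 < S := hδ.trans_le hδS
  have hlog : 0 < Real.log A - Real.log θ := by linarith [Real.log_pos hA, Real.log_neg hθ0 hθ1]
  set α := -Real.log θ / (Real.log A - Real.log θ) with hα
  -- At the real exponent `t` the terms `δ * A ^ t` and `S * θ ^ t` balance.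
  set t := (Real.log S - Real.log δ) / (Real.log A - Real.log θ) with ht
  have ht0 : 0 ≤ t := div_nonneg (sub_nonneg.2 (Real.log_le_log hδ hδS)) hlog.le
  have hSθ : S * θ ^ t = δ ^ α * S ^ (1 - α) := by
    rw [Real.rpow_def_of_pos hθ0, Real.rpow_def_of_pos hδ, Real.rpow_def_of_pos hS,
      ← Real.exp_add]
    nth_rw 1 [← Real.exp_log hS]
    rw [← Real.exp_add, ht, hα]
    congr 1
    field_simp
    ring
  have hδA : δ * A ^ t = S * θ ^ t := by
    rw [Real.rpow_def_of_pos hθ0, Real.rpow_def_of_pos (zero_lt_one.trans hA),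
      ← Real.exp_log hS, ← Real.exp_log hδ, ← Real.exp_add, ← Real.exp_add, ht]
    congr 1
    field_simp
    ring
  calc X ≤ δ * A ^ ⌊t⌋₊ + S * θ ^ ⌊t⌋₊ := hX _
    _ ≤ δ * A ^ t + S * θ ^ (t - 1) := by
        rw [← Real.rpow_natCast A, ← Real.rpow_natCast θ]
        gcongr ?_ * ?_ + ?_ * ?_
        · exact Real.rpow_le_rpow_of_exponent_le hA.le (Nat.floor_le ht0)
        · exact Real.rpow_le_rpow_of_exponent_ge hθ0 hθ1.le (Nat.sub_one_lt_floor t).le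
    _ = (1 + θ⁻¹) * (S * θ ^ t) := by
        rw [hδA, Real.rpow_sub_one hθ0.ne']
        ring
    _ = (1 + θ⁻¹) * δ ^ α * S ^ (1 - α) := by rw [hSθ, mul_assoc]

lemma exists_rpow_interpolation_of_forall_pow {A θ : ℝ} (hA : 1 < A) (hθ0 : 0 < θ) (hθ1 : θ < 1) :
    ∃ α ∈ Ioo (0 : ℝ) 1, ∃ C > 0, ∀ X S δ : ℝ, 0 ≤ δ → 0 ≤ S → X ≤ S →
      (∀ n : ℕ, X ≤ δ * A ^ n + S * θ ^ n) → X ≤ C * δ ^ α * S ^ (1 - α) := by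
  have hlogθ : Real.log θ < 0 := Real.log_neg hθ0 hθ1
  have hlogA : 0 < Real.log A := Real.log_pos hA
  have hlog : 0 < Real.log A - Real.log θ := by linarith
  have hα0 : 0 < -Real.log θ / (Real.log A - Real.log θ) := div_pos (neg_pos.2 hlogθ) hlog
  have hα1 : -Real.log θ / (Real.log A - Real.log θ) < 1 := (div_lt_one hlog).2 (by linarith)
  refine ⟨_, ⟨hα0, hα1⟩, 1 + θ⁻¹, by positivity, fun X S δ hδ hS hXS hX => ?_⟩
  rcases lt_or_ge S δ with hSδ | hδS
  · set α := -Real.log θ / (Real.log A - Real.log θ)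
    calc X ≤ S ^ α * S ^ (1 - α) := by
          rwa [← Real.rpow_add_of_nonneg hS hα0.le (by linarith), add_sub_cancel, Real.rpow_one]
      _ ≤ δ ^ α * S ^ (1 - α) := by gcongr
      _ ≤ (1 + θ⁻¹) * δ ^ α * S ^ (1 - α) := by
          rw [mul_assoc]
          exact le_mul_of_one_le_left (by positivity) (le_add_of_nonneg_right (by positivity))
  rcases hδ.eq_or_lt with rfl | hδ
  · have hlim : Filter.Tendsto (fun n : ℕ => S * θ ^ n) Filter.atTop (nhds (S * 0)) :=
      (tendsto_pow_atTop_nhds_zero_of_lt_one hθ0.le hθ1).const_mul S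
    rw [Real.zero_rpow hα0.ne', mul_zero, zero_mul, ← mul_zero S]
    exact ge_of_tendsto' hlim fun n => by simpa only [zero_mul, zero_add] using hX n
  · exact le_rpow_mul_rpow_of_forall_pow hA hθ0 hθ1 hδ hδS hX

variable {R r m S δ : ℝ} {E : Set ℝ} {G : ℂ → ℂ}

lemma exists_equispaced_nodes (hm : 0 < m) (hE : E ⊆ Icc (-r) r)
    (hvol : ENNReal.ofReal m ≤ volume E) (n : ℕ) :
    ∃ x : ℕ → ℝ, (∀ i ≤ n, x i ∈ E) ∧
      ∀ i ≤ n, ∀ j ≤ n, |(i : ℝ) - j| * (m / (n + 1)) ≤ |x i - x j| := by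
  have hlt : (n : ℝ) * (m / (n + 1)) < m := by
    rw [mul_div_left_comm]
    exact mul_lt_of_lt_one_right hm ((div_lt_one (by positivity)).2 (lt_add_one _))
  obtain ⟨x, hxE, hx⟩ := exists_separated_points_of_lt_volume (by positivity) n
    (bddBelow_Icc.mono hE) (((ENNReal.ofReal_lt_ofReal_iff hm).2 hlt).trans_le hvol)
  exact ⟨x, hxE, fun i hi j hj => abs_sub_mul_le_abs_sub_of_add_le hx hi hj⟩

lemma two_mul_div_pow_div_factorial_le {ρ : ℝ} (hρ : 0 ≤ ρ) (hm : 0 < m) (n : ℕ) :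
    (2 * ρ / (m / (n + 1))) ^ n / n ! ≤ Real.exp 1 * (2 * ρ * Real.exp 1 / m) ^ n := by
  calc (2 * ρ / (m / (n + 1))) ^ n / n ! = (2 * ρ / m) ^ n * (((n : ℝ) + 1) ^ n / n !) := by
        rw [div_div_eq_mul_div, mul_div_right_comm, mul_pow, mul_div_assoc]
    _ ≤ (2 * ρ / m) ^ n * Real.exp (n + 1) := by
        gcongr
        exact Real.pow_div_factorial_le_exp _ (by positivity) n
    _ = Real.exp 1 * (2 * ρ * Real.exp 1 / m) ^ n := by
        rw [Real.exp_add, ← Real.exp_one_pow n, mul_div_right_comm, mul_pow]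
        ring

lemma norm_sub_eval_interpolate_le {s : Finset ℕ} {v : ℕ → ℂ} {T : ℝ} {z : ℂ} (hR : 0 < R)
    (hrR : r < R) (hG : DiffContOnCl ℂ G (ball 0 R)) (hS : ∀ w ∈ sphere (0 : ℂ) R, ‖G w‖ ≤ S)
    (hinj : InjOn v s) (hv : ∀ i ∈ s, ‖v i‖ ≤ r)
    (hT : ∀ w ∈ sphere (0 : ℂ) R, ‖(Lagrange.interpolate s v (G ∘ v)).eval w‖ ≤ T)
    (hz : ‖z‖ ≤ r) :
    ‖G z - (Lagrange.interpolate s v (G ∘ v)).eval z‖ ≤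
      (S + T) * (2 * R * r / (R ^ 2 + r ^ 2)) ^ s.card := by
  have hmem : (R : ℂ) ∈ sphere (0 : ℂ) R := by simp [abs_of_pos hR]
  have hST : 0 ≤ S + T :=
    add_nonneg ((norm_nonneg _).trans (hS _ hmem)) ((norm_nonneg _).trans (hT _ hmem))
  have hdiff : DiffContOnCl ℂ (fun w => G w - (Lagrange.interpolate s v (G ∘ v)).eval w)
      (ball 0 R) := hG.sub (Polynomial.differentiable _).diffContOnCl
  refine (norm_le_mul_prod_inv_canonicalFactor (s.image v) hdiff
    (fun w hw => norm_sub_le_of_le (hS w hw) (hT w hw)) (Finset.forall_mem_image.2 fun i hi =>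
      mem_ball_zero_iff.2 ((hv i hi).trans_lt hrR)) (Finset.forall_mem_image.2 fun i hi => ?_) hR
    (mem_closedBall_zero_iff.2 (hz.trans hrR.le))).trans ?_
  · rw [Lagrange.eval_interpolate_at_node _ hinj hi, Function.comp_apply, sub_self]
  · rw [Finset.prod_image hinj, ← Finset.prod_const]
    gcongr with i hi
    exact norm_inv_canonicalFactor_le hR hrR (hv i hi) hz

/-- The interpolant at `n + 1` separated points of `E` is small on the whole disc, and the
remainder gains one Blaschke factor per node. -/
lemma norm_le_pow_add_pow_of_norm_le_on (hr : 0 < r) (hrR : r < R) (hm : 0 < m)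
    (hG : DiffContOnCl ℂ G (ball 0 R)) (hS : ∀ z ∈ sphere (0 : ℂ) R, ‖G z‖ ≤ S)
    (hE : E ⊆ Icc (-r) r) (hvol : ENNReal.ofReal m ≤ volume E) (hδ : ∀ x ∈ E, ‖G x‖ ≤ δ)
    {z : ℂ} (hz : ‖z‖ ≤ r) (n : ℕ) :
    ‖G z‖ ≤ 2 * Real.exp 1 * δ * (4 * R * Real.exp 1 / m) ^ n +
      S * (2 * R * r / (R ^ 2 + r ^ 2)) ^ n := by
  have hR : 0 < R := hr.trans hrR
  obtain ⟨x, hxE, hsep⟩ := exists_equispaced_nodes hm hE hvol n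
  have hδ0 : 0 ≤ δ := (norm_nonneg _).trans (hδ _ (hxE 0 n.zero_le))
  have hS0 : 0 ≤ S := (norm_nonneg _).trans (hS R (by simp [abs_of_pos hR]))
  set v : ℕ → ℂ := fun i => x i with hv
  have hvr : ∀ i ≤ n, ‖v i‖ ≤ r := fun i hi => by
    simpa only [hv, norm_real, Real.norm_eq_abs] using abs_le.2 (hE (hxE i hi))
  have hvsep : ∀ i ≤ n, ∀ j ≤ n, |(i : ℝ) - j| * (m / (n + 1)) ≤ ‖v i - v j‖ := by
    simpa only [hv, ← ofReal_sub, norm_real, Real.norm_eq_abs] using hsep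
  set P := Lagrange.interpolate (Finset.range (n + 1)) v (G ∘ v)
  set D := δ * (Real.exp 1 * (4 * R * Real.exp 1 / m) ^ n) with hD
  set θ := 2 * R * r / (R ^ 2 + r ^ 2)
  have hP : ∀ w : ℂ, ‖w‖ ≤ R → ‖P.eval w‖ ≤ D := by
    intro w hw
    refine (norm_eval_lagrange_interpolate_le (by positivity) hvsep (ρ := 2 * R)
      (fun j hj => (norm_sub_le _ _).trans (by linarith [hvr j hj]))
      fun i hi => hδ _ (hxE i hi)).trans ?_
    rw [hD, show 4 * R = 2 * (2 * R) by ring]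
    gcongr
    exact two_mul_div_pow_div_factorial_le (by positivity) hm n
  have hrem : ‖G z - P.eval z‖ ≤ (S + D) * θ ^ (n + 1) := by
    simpa only [Finset.card_range] using norm_sub_eval_interpolate_le hR hrR hG hS
      (injOn_range_of_abs_sub_mul_le (by positivity) hvsep)
      (fun i hi => hvr i (Nat.lt_succ_iff.1 (Finset.mem_range.1 hi)))
      (fun w hw => hP w (mem_sphere_zero_iff_norm.1 hw).le) hz
  have hθ1 : θ ≤ 1 := (div_le_one (by positivity)).2 (by nlinarith [sq_nonneg (R - r)])
  calc ‖G z‖ ≤ ‖G z - P.eval z‖ + ‖P.eval z‖ := norm_le_norm_sub_add _ _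
    _ ≤ (S + D) * θ ^ (n + 1) + D := add_le_add hrem (hP z (hz.trans hrR.le))
    _ ≤ S * θ ^ n + D * 1 + D := by
        rw [add_mul]
        gcongr ?_ * ?_ + ?_ * ?_ + _
        · exact pow_le_pow_of_le_one (by positivity) hθ1 n.le_succ
        · exact pow_le_one₀ (by positivity) hθ1
    _ = _ := by
        rw [hD]
        ring

theorem exists_norm_le_rpow_of_volume_le (hr : 0 < r) (hrR : r < R) (hm : 0 < m) :
    ∃ α ∈ Ioo (0 : ℝ) 1, ∃ C > 0, ∀ (G : ℂ → ℂ) (E : Set ℝ) (S δ : ℝ),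
      DiffContOnCl ℂ G (ball 0 R) → (∀ z ∈ closedBall (0 : ℂ) R, ‖G z‖ ≤ S) →
      E ⊆ Icc (-r) r → ENNReal.ofReal m ≤ volume E → (∀ x ∈ E, ‖G x‖ ≤ δ) →
      ∀ z : ℂ, ‖z‖ ≤ r → ‖G z‖ ≤ C * δ ^ α * S ^ (1 - α) := by
  have hR : 0 < R := hr.trans hrR
  have hθ1 : 2 * R * r / (R ^ 2 + r ^ 2) < 1 := by
    rw [div_lt_one (by positivity)]
    nlinarith [mul_pos (sub_pos.2 hrR) (sub_pos.2 hrR)]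
  obtain ⟨α, hα, C, hC, hbound⟩ := exists_rpow_interpolation_of_forall_pow
    (lt_add_of_pos_right 1 (by positivity : 0 < 4 * R * Real.exp 1 / m)) (by positivity) hθ1
  refine ⟨α, hα, C * (2 * Real.exp 1) ^ α, by positivity, ?_⟩
  intro G E S δ hG hS hE hvol hδ z hz
  obtain ⟨x, hx⟩ : E.Nonempty :=
    nonempty_of_measure_ne_zero ((ENNReal.ofReal_pos.2 hm).trans_le hvol).ne'
  have hδ0 : 0 ≤ δ := (norm_nonneg _).trans (hδ x hx)
  have hGz : ‖G z‖ ≤ S := hS z (mem_closedBall_zero_iff.2 (hz.trans hrR.le))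
  refine (hbound ‖G z‖ S (2 * Real.exp 1 * δ) (by positivity) ((norm_nonneg _).trans hGz) hGz
    fun n => ?_).trans_eq ?_
  · refine (norm_le_pow_add_pow_of_norm_le_on hr hrR hm hG
      (fun w hw => hS w (sphere_subset_closedBall hw)) hE hvol hδ hz n).trans ?_
    gcongr
    exact le_add_of_nonneg_left zero_le_one
  · rw [Real.mul_rpow (by positivity) hδ0, ← mul_assoc C]

end TwoConstants

section CauchyPompeiu

open Complex Real Metric
open scoped ComplexConjugate

/-- Twice the Wirtinger derivative `∂/∂z̄`, taken in the real sense, so that `dbar F = 0` is the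
Cauchy–Riemann equation. -/
noncomputable def dbar (F : ℂ → ℂ) (z : ℂ) : ℂ := fderiv ℝ F z 1 + I * fderiv ℝ F z I

lemma apply_one_add_I_mul_apply_I_mul_conj (L : ℂ →L[ℝ] ℂ) (ζ : ℂ) :
    (L 1 + I * L I) * conj ζ = L ζ + I * L (I * ζ) := by
  have hL : ∀ x y : ℝ, L (x + y * I) = x * L 1 + y * L I := fun x y => by
    have hxy : (x : ℂ) + y * I = x • (1 : ℂ) + y • I := by simp only [real_smul, mul_one]
    rw [hxy, map_add, map_smul, map_smul, real_smul, real_smul]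
  have hIζ : I * ζ = (-ζ.im : ℝ) + ζ.re * I := by apply Complex.ext <;> simp
  have hconj : conj ζ = ζ.re - ζ.im * I := by apply Complex.ext <;> simp
  rw [hIζ, hconj, hL]
  nth_rw 3 [← re_add_im ζ]
  rw [hL, ofReal_neg]
  linear_combination (-(ζ.im : ℂ) * L I) * I_mul_I

lemma integral_Ioi_fderiv_smul {E F : Type*} [NormedAddCommGroup E] [NormedSpace ℝ E]
    [NormedAddCommGroup F] [NormedSpace ℝ F] [CompleteSpace F] {k : E → F} (hk : ContDiff ℝ 1 k)
    (hks : HasCompactSupport k) {e : E} (he : e ≠ 0) :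
    ∫ r in Ioi (0 : ℝ), fderiv ℝ k (r • e) e = -k 0 := by
  have hderiv : deriv (fun r : ℝ => k (r • e)) = fun r => fderiv ℝ k (r • e) e := by
    ext r
    have hsmul : HasDerivAt (fun r : ℝ => r • e) ((1 : ℝ) • e) r := (hasDerivAt_id r).smul_const e
    rw [one_smul] at hsmul
    exact ((hk.differentiable one_ne_zero _).hasFDerivAt.comp_hasDerivAt r hsmul).deriv
  have h : ∫ r in Ioi 0, deriv (fun r : ℝ => k (r • e)) r = -k ((0 : ℝ) • e) :=
    (hks.comp_isClosedEmbedding (isClosedEmbedding_smul_left he)).integral_Ioi_deriv_eq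
      (hk.comp (contDiff_id.smul contDiff_const)) 0
  rwa [hderiv, zero_smul] at h

variable {k : ℂ → ℂ}

lemma integral_fderiv_I_mul_circleMap (hk : ContDiff ℝ 1 k) {r : ℝ} (hr : r ≠ 0) :
    ∫ θ in Ioo (-π) π, fderiv ℝ k (r • circleMap 0 1 θ) (I * circleMap 0 1 θ) = 0 := by
  have hderiv : ∀ θ : ℝ, HasDerivAt (fun θ => r⁻¹ • k (r • circleMap 0 1 θ))
      (fderiv ℝ k (r • circleMap 0 1 θ) (I * circleMap 0 1 θ)) θ := by
    intro θ
    have hcircle : HasDerivAt (fun θ => r • circleMap 0 1 θ) (r • (circleMap 0 1 θ * I)) θ :=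
      (hasDerivAt_circleMap 0 1 θ).const_smul r
    refine (((hk.differentiable one_ne_zero _).hasFDerivAt.comp_hasDerivAt θ hcircle).const_smul
      r⁻¹).congr_deriv ?_
    rw [map_smul, inv_smul_smul₀ hr, mul_comm I]
  have hcont : Continuous fun θ : ℝ => fderiv ℝ k (r • circleMap 0 1 θ) (I * circleMap 0 1 θ) :=
    ((hk.continuous_fderiv one_ne_zero).comp (by fun_prop)).clm_apply (by fun_prop)
  rw [← integral_Ioc_eq_integral_Ioo, ← intervalIntegral.integral_of_le (by linarith [pi_pos]),
    intervalIntegral.integral_eq_sub_of_hasDerivAt (fun θ _ => hderiv θ)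
      (hcont.intervalIntegrable _ _)]
  simp [circleMap_zero]

lemma integrableOn_fderiv_smul_circleMap (hk : ContDiff ℝ 1 k) (hks : HasCompactSupport k)
    {e : ℝ → ℂ} (he : Continuous e) :
    IntegrableOn (fun p : ℝ × ℝ => fderiv ℝ k (p.1 • circleMap 0 1 p.2) (e p.2))
      (Ioi 0 ×ˢ Ioo (-π) π) := by
  obtain ⟨ρ, -, hρ⟩ := hks.isCompact.isBounded.exists_pos_norm_lt
  have hcont : Continuous fun p : ℝ × ℝ => fderiv ℝ k (p.1 • circleMap 0 1 p.2) (e p.2) :=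
    ((hk.continuous_fderiv one_ne_zero).comp (by fun_prop)).clm_apply (by fun_prop)
  have hcompact : IntegrableOn (fun p : ℝ × ℝ => fderiv ℝ k (p.1 • circleMap 0 1 p.2) (e p.2))
      (Icc 0 ρ ×ˢ Icc (-π) π) :=
    hcont.continuousOn.integrableOn_compact (isCompact_Icc.prod isCompact_Icc)
  refine hcompact.of_forall_sdiff_eq_zero (measurableSet_Ioi.prod measurableSet_Ioo) ?_
  rintro p ⟨⟨hp1, hp2⟩, hp⟩
  suffices fderiv ℝ k (p.1 • circleMap 0 1 p.2) = 0 by rw [this, zero_apply]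
  by_contra hne
  refine hp ⟨⟨hp1.le, ?_⟩, Ioo_subset_Icc_self hp2⟩
  simpa [abs_of_pos (mem_Ioi.1 hp1)] using (hρ _ (support_fderiv_subset ℝ hne)).le

lemma integral_dbar_mul_inv_eq_integral_polar (k : ℂ → ℂ) :
    ∫ ζ : ℂ, dbar k ζ * ζ⁻¹ = ∫ p in Ioi (0 : ℝ) ×ˢ Ioo (-π) π,
      (fderiv ℝ k (p.1 • circleMap 0 1 p.2) (circleMap 0 1 p.2) +
        I * fderiv ℝ k (p.1 • circleMap 0 1 p.2) (I * circleMap 0 1 p.2)) := by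
  rw [← Complex.integral_comp_polarCoord_symm, polarCoord_target]
  refine setIntegral_congr_fun (measurableSet_Ioi.prod measurableSet_Ioo) fun p hp => ?_
  have hsymm : Complex.polarCoord.symm p = p.1 • circleMap 0 1 p.2 := by
    rw [Complex.polarCoord_symm_apply, circleMap_zero, ofReal_one, one_mul, exp_mul_I, ofReal_cos,
      ofReal_sin, real_smul]
  have hinv : (p.1 • circleMap 0 1 p.2)⁻¹ = p.1⁻¹ • conj (circleMap 0 1 p.2) := by
    rw [smul_inv₀, circleMap_zero_inv, conj_circleMap_zero, inv_one]
  rw [hsymm, dbar, hinv, mul_smul_comm, apply_one_add_I_mul_apply_I_mul_conj,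
    smul_inv_smul₀ (mem_Ioi.1 hp.1).ne']

theorem integral_dbar_mul_inv (hk : ContDiff ℝ 1 k) (hks : HasCompactSupport k) :
    ∫ ζ : ℂ, dbar k ζ * ζ⁻¹ = -(2 * π) * k 0 := by
  have hradial := integrableOn_fderiv_smul_circleMap hk hks (continuous_circleMap 0 1)
  have hangular := integrableOn_fderiv_smul_circleMap hk hks (e := fun θ => I * circleMap 0 1 θ)
    (by fun_prop)
  have hradial_eq : ∫ p in Ioi (0 : ℝ) ×ˢ Ioo (-π) π,
      fderiv ℝ k (p.1 • circleMap 0 1 p.2) (circleMap 0 1 p.2) = -(2 * π) * k 0 := by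
    rw [Measure.volume_eq_prod, ← setIntegral_prod_swap]
    refine (setIntegral_prod _ hradial.swap).trans ?_
    simp only [Function.comp_apply, Prod.swap_prod_mk,
      integral_Ioi_fderiv_smul hk hks (circleMap_ne_center one_ne_zero)]
    rw [setIntegral_const, Real.volume_real_Ioo_of_le (by linarith [pi_pos]), real_smul]
    push_cast
    ring
  have hangular_eq : ∫ p in Ioi (0 : ℝ) ×ˢ Ioo (-π) π,
      fderiv ℝ k (p.1 • circleMap 0 1 p.2) (I * circleMap 0 1 p.2) = 0 := by
    rw [Measure.volume_eq_prod, setIntegral_prod _ hangular]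
    exact setIntegral_eq_zero_of_forall_eq_zero fun r hr =>
      integral_fderiv_I_mul_circleMap hk (mem_Ioi.1 hr).ne'
  rw [integral_dbar_mul_inv_eq_integral_polar, integral_add hradial (hangular.const_mul I),
    integral_const_mul, hradial_eq, hangular_eq, mul_zero, add_zero]

lemma locallyIntegrable_inv : LocallyIntegrable fun z : ℂ => z⁻¹ := by
  refine locallyIntegrable_of_norm_le_rpow (C := 1) (α := 1) (by simp) (by simp) (.of_forall
    fun z => ?_) measurable_inv.aestronglyMeasurable
  rw [norm_inv, one_mul, Real.rpow_neg_one]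

end CauchyPompeiu

section CauchyTransform

open Complex Real Metric
open scoped Convolution

/-- The solution operator `g ↦ (2πz)⁻¹ ⋆ g` of the inhomogeneous Cauchy–Riemann equation
`dbar s = g`; the constant is `(2π)⁻¹` because `dbar` is twice `∂/∂z̄`. -/
noncomputable def cauchyTransform (g : ℂ → ℂ) (z : ℂ) : ℂ :=
  (2 * π : ℂ)⁻¹ * ((fun ζ : ℂ => ζ⁻¹) ⋆[ContinuousLinearMap.mul ℝ ℂ, volume] g) z

lemma cauchyTransform_apply (g : ℂ → ℂ) (z : ℂ) :
    cauchyTransform g z = (2 * π : ℂ)⁻¹ * ∫ ζ : ℂ, ζ⁻¹ * g (z - ζ) := rfl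

variable {g : ℂ → ℂ}

lemma contDiff_cauchyTransform {n : ℕ∞} (hg : ContDiff ℝ n g) (hgs : HasCompactSupport g) :
    ContDiff ℝ n (cauchyTransform g) :=
  contDiff_const.mul (hgs.contDiff_convolution_right _ locallyIntegrable_inv hg)

theorem cauchyTransform_dbar (hg : ContDiff ℝ 1 g) (hgs : HasCompactSupport g) (z : ℂ) :
    cauchyTransform (dbar g) z = g z := by
  have hreflect : ∀ ζ, dbar (fun ζ => g (z - ζ)) ζ = -dbar g (z - ζ) := by
    intro ζ
    have hderiv := (hg.differentiable one_ne_zero (z - ζ)).hasFDerivAt.comp ζ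
      ((hasFDerivAt_id ζ).const_sub z)
    rw [dbar, show fderiv ℝ (fun ζ => g (z - ζ)) ζ = _ from hderiv.fderiv, dbar]
    simp only [ContinuousLinearMap.comp_apply, neg_apply, ContinuousLinearMap.id_apply, map_neg]
    ring
  have h := integral_dbar_mul_inv (hg.comp (contDiff_const.sub contDiff_id))
    (hgs.comp_homeomorph (Homeomorph.subLeft z))
  simp only [Function.comp_def, id, hreflect, neg_mul, integral_neg,
    sub_zero, neg_inj] at h
  have hπ : (2 * π : ℂ) ≠ 0 := by simp [pi_ne_zero]
  simp only [cauchyTransform_apply, mul_comm (_⁻¹) (dbar g _), h, inv_mul_cancel_left₀ hπ]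

lemma fderiv_cauchyTransform_apply (hg : ContDiff ℝ 1 g) (hgs : HasCompactSupport g) (z v : ℂ) :
    fderiv ℝ (cauchyTransform g) z v = cauchyTransform (fun ζ => fderiv ℝ g ζ v) z := by
  have hexists : ConvolutionExistsAt (fun ζ : ℂ => ζ⁻¹) (fderiv ℝ g) z
      ((ContinuousLinearMap.mul ℝ ℂ).precompR ℂ) volume :=
    (hgs.fderiv ℝ).convolutionExists_right _ locallyIntegrable_inv
      (hg.continuous_fderiv one_ne_zero) z
  have hderiv := (hgs.hasFDerivAt_convolution_right (ContinuousLinearMap.mul ℝ ℂ)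
    locallyIntegrable_inv hg z).const_mul (2 * π : ℂ)⁻¹
  rw [show fderiv ℝ (cauchyTransform g) z = _ from hderiv.fderiv, smul_apply, convolution,
    ContinuousLinearMap.integral_apply hexists.integrable]
  rfl

theorem dbar_cauchyTransform (hg : ContDiff ℝ 1 g) (hgs : HasCompactSupport g) (z : ℂ) :
    dbar (cauchyTransform g) z = g z := by
  have hint : ∀ v : ℂ, Integrable fun ζ : ℂ => ζ⁻¹ * fderiv ℝ g (z - ζ) v := fun v =>
    (hgs.fderiv_apply ℝ v).convolutionExists_right (ContinuousLinearMap.mul ℝ ℂ)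
      locallyIntegrable_inv ((hg.continuous_fderiv one_ne_zero).clm_apply continuous_const) z
  rw [← cauchyTransform_dbar hg hgs z, dbar, fderiv_cauchyTransform_apply hg hgs,
    fderiv_cauchyTransform_apply hg hgs]
  simp only [cauchyTransform_apply, dbar]
  rw [mul_left_comm, ← mul_add, ← integral_const_mul,
    ← integral_add (hint _) ((hint _).const_mul _)]
  simp only [mul_add, mul_left_comm I]

lemma norm_cauchyTransform_le {R B : ℝ} (hB : 0 ≤ B) (hg : ∀ z, ‖g z‖ ≤ B)
    (hgs : Function.support g ⊆ closedBall 0 R) {z : ℂ} (hz : z ∈ closedBall 0 R) :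
    ‖cauchyTransform g z‖ ≤ (2 * π)⁻¹ * (∫ ζ in closedBall (0 : ℂ) (2 * R), ‖ζ⁻¹‖) * B := by
  have hint : IntegrableOn (fun ζ : ℂ => ‖ζ⁻¹‖) (closedBall 0 (2 * R)) :=
    (locallyIntegrable_inv.integrableOn_isCompact (isCompact_closedBall _ _)).norm
  have hbound : ∀ ζ : ℂ, ‖ζ⁻¹ * g (z - ζ)‖ ≤
      (closedBall (0 : ℂ) (2 * R)).indicator (fun ζ => ‖ζ⁻¹‖ * B) ζ := by
    intro ζ
    by_cases hζ : g (z - ζ) = 0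
    · rw [hζ, mul_zero, norm_zero]
      exact indicator_nonneg (fun _ _ => by positivity) _
    · have hzζ : ‖z - ζ‖ ≤ R := mem_closedBall_zero_iff.1 (hgs hζ)
      have hζR : ‖ζ‖ ≤ 2 * R := by
        calc ‖ζ‖ = ‖z - (z - ζ)‖ := by rw [sub_sub_cancel]
          _ ≤ ‖z‖ + ‖z - ζ‖ := norm_sub_le _ _
          _ ≤ 2 * R := by linarith [mem_closedBall_zero_iff.1 hz]
      rw [indicator_of_mem (mem_closedBall_zero_iff.2 hζR), norm_mul]
      gcongr
      exact hg _
  have hle := norm_integral_le_of_norm_le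
    ((integrable_indicator_iff measurableSet_closedBall).2 (hint.mul_const B)) (.of_forall hbound)
  rw [integral_indicator measurableSet_closedBall, integral_mul_const] at hle
  rw [cauchyTransform_apply, norm_mul, mul_assoc]
  refine mul_le_mul (le_of_eq ?_) hle (norm_nonneg _) (by positivity)
  rw [norm_inv, norm_mul, Complex.norm_ofNat, norm_real, norm_of_nonneg pi_pos.le]

end CauchyTransform

section SimilarityPrinciple

open Complex Metric
open scoped ComplexConjugate

lemma differentiableAt_complex_of_dbar_eq_zero {F : ℂ → ℂ} {z : ℂ} (hF : DifferentiableAt ℝ F z)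
    (hdbar : dbar F z = 0) : DifferentiableAt ℂ F z := by
  refine differentiableAt_complex_iff_differentiableAt_real.2 ⟨hF, ?_⟩
  rw [dbar] at hdbar
  rw [smul_eq_mul]
  linear_combination (-I) * hdbar + fderiv ℝ F z I * I_mul_I

lemma dbar_exp_neg_mul_sub {s f t : ℂ → ℂ} {z : ℂ} (hs : DifferentiableAt ℝ s z)
    (hf : DifferentiableAt ℝ f z) (ht : DifferentiableAt ℝ t z) :
    dbar (fun z => exp (-s z) * f z - t z) z =
      exp (-s z) * (dbar f z - dbar s z * f z) - dbar t z := by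
  have hderiv := (hs.hasFDerivAt.neg.cexp.mul hf.hasFDerivAt).sub ht.hasFDerivAt
  rw [dbar, show fderiv ℝ (fun z => exp (-s z) * f z - t z) z = _ from hderiv.fderiv]
  simp only [dbar, sub_apply, add_apply, smul_apply, neg_apply, smul_eq_mul, Pi.neg_apply]
  ring

lemma norm_exp_neg_le_of_norm_le {w : ℂ} {A : ℝ} (hw : ‖w‖ ≤ A) : ‖exp (-w)‖ ≤ Real.exp A :=
  (norm_exp_le_exp_norm _).trans (Real.exp_le_exp.2 ((norm_neg w).trans_le hw))

lemma norm_sq_mul_exp_neg_mul_le {w a f : ℂ} {A N τ : ℝ} (hN : 0 ≤ N) (hτ : 0 ≤ τ)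
    (hw : ‖w‖ ≤ A) (ha : ‖a‖ ≤ N * ‖f‖) :
    ‖(τ : ℂ) ^ 2 * (exp (-w) * a)‖ ≤ Real.exp A * N * τ * (‖f‖ ^ 2 + τ ^ 2) := by
  calc ‖(τ : ℂ) ^ 2 * (exp (-w) * a)‖ = τ ^ 2 * (‖exp (-w)‖ * ‖a‖) := by
        rw [norm_mul, norm_mul, norm_pow, norm_real, Real.norm_of_nonneg hτ]
    _ ≤ τ ^ 2 * (Real.exp A * (N * ‖f‖)) := by
        gcongr
        exact norm_exp_neg_le_of_norm_le hw
    _ = Real.exp A * N * τ * (τ * ‖f‖) := by ring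
    _ ≤ Real.exp A * N * τ * (‖f‖ ^ 2 + τ ^ 2) := by
        gcongr
        nlinarith [sq_nonneg (‖f‖ - τ), sq_nonneg ‖f‖, sq_nonneg τ]

lemma norm_exp_neg_mul_sub_le {w f t : ℂ} {A B τ : ℝ} (hA : 0 ≤ A) (hB : 0 ≤ B) (hτ : 0 ≤ τ)
    (hw : ‖w‖ ≤ A) (ht : ‖t‖ ≤ B * τ) :
    ‖exp (-w) * f - t‖ ≤ Real.exp A * (1 + B) * (‖f‖ + τ) := by
  have hexp := norm_exp_neg_le_of_norm_le hw
  have hA1 : 1 ≤ Real.exp A := Real.one_le_exp hA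
  calc ‖exp (-w) * f - t‖ ≤ ‖exp (-w)‖ * ‖f‖ + ‖t‖ := by
        rw [← norm_mul]
        exact norm_sub_le _ _
    _ ≤ Real.exp A * ‖f‖ + Real.exp A * (B * τ) := by
        gcongr
        exact ht.trans (le_mul_of_one_le_left (by positivity) hA1)
    _ ≤ Real.exp A * (1 + B) * (‖f‖ + τ) := by
        have : 0 ≤ Real.exp A * (B * ‖f‖ + τ) := by positivity
        linarith

lemma norm_le_mul_norm_exp_neg_mul_sub_add {w f t : ℂ} {A B τ : ℝ} (hB : 0 ≤ B) (hτ : 0 ≤ τ)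
    (hw : ‖w‖ ≤ A) (ht : ‖t‖ ≤ B * τ) :
    ‖f‖ ≤ Real.exp A * (1 + B) * (‖exp (-w) * f - t‖ + τ) := by
  have hexp : ‖exp w‖ ≤ Real.exp A := (norm_exp_le_exp_norm _).trans (Real.exp_le_exp.2 hw)
  have hf : f = exp w * ((exp (-w) * f - t) + t) := by
    rw [sub_add_cancel, ← mul_assoc, ← exp_add, add_neg_cancel, exp_zero, one_mul]
  generalize exp (-w) * f - t = G at hf ⊢
  calc ‖f‖ ≤ ‖exp w‖ * (‖G‖ + ‖t‖) := by
        conv_lhs => rw [hf]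
        rw [norm_mul]
        gcongr
        exact norm_add_le _ _
    _ ≤ Real.exp A * (‖G‖ + B * τ) := by gcongr
    _ ≤ Real.exp A * (1 + B) * (‖G‖ + τ) := by
        have : 0 ≤ Real.exp A * (B * ‖G‖ + τ) := by positivity
        linarith

/-- The cutoff of `1 / (‖f‖² + τ²)` used to divide by `f` in the similarity principle; `τ > 0`
keeps it smooth across the zeros of `f`. -/
noncomputable def regularizedInvNormSq (χ : ContDiffBump (0 : ℂ)) (f : ℂ → ℂ) (τ : ℝ) (z : ℂ) : ℝ :=
  χ z / (‖f z‖ ^ 2 + τ ^ 2)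

section RegularizedInvNormSq

variable (χ : ContDiffBump (0 : ℂ)) (f : ℂ → ℂ) {τ : ℝ}

lemma contDiff_regularizedInvNormSq {f : ℂ → ℂ} (hf : ContDiff ℝ 1 f) (hτ : 0 < τ) :
    ContDiff ℝ 1 (regularizedInvNormSq χ f τ) :=
  χ.contDiff.div ((hf.norm_sq ℝ).add contDiff_const) fun z => by positivity

lemma support_regularizedInvNormSq_smul_subset (h : ℂ → ℂ) :
    Function.support (fun z => regularizedInvNormSq χ f τ z • h z) ⊆ closedBall 0 χ.rOut := by
  intro z hz
  refine ball_subset_closedBall (χ.support_eq ▸ fun hχ => hz ?_)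
  simp only [regularizedInvNormSq, hχ, zero_div, zero_smul]

lemma norm_regularizedInvNormSq_smul_le (hτ : 0 < τ) {h : ℂ → ℂ} {B : ℝ} (hB : 0 ≤ B)
    (hle : ∀ z ∈ closedBall 0 χ.rOut, ‖h z‖ ≤ B * (‖f z‖ ^ 2 + τ ^ 2)) (z : ℂ) :
    ‖regularizedInvNormSq χ f τ z • h z‖ ≤ B := by
  by_cases hz : z ∈ closedBall 0 χ.rOut
  · have hpos : 0 < ‖f z‖ ^ 2 + τ ^ 2 := by positivity
    rw [norm_smul, regularizedInvNormSq, norm_div, Real.norm_of_nonneg χ.nonneg,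
      Real.norm_of_nonneg hpos.le, div_mul_eq_mul_div, div_le_iff₀ hpos]
    exact (mul_le_of_le_one_left (norm_nonneg _) χ.le_one).trans (hle z hz)
  · have hsupport := mt (@support_regularizedInvNormSq_smul_subset χ f τ h z) hz
    rwa [Function.notMem_support.1 hsupport, norm_zero]

theorem exists_dbar_eq_regularizedInvNormSq_smul : ∃ c ≥ 0, ∀ (f h : ℂ → ℂ) (τ B : ℝ),
    ContDiff ℝ 1 f → ContDiff ℝ 1 h → 0 < τ → 0 ≤ B →
    (∀ z ∈ closedBall 0 χ.rOut, ‖h z‖ ≤ B * (‖f z‖ ^ 2 + τ ^ 2)) →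
    ∃ s, ContDiff ℝ 1 s ∧ (∀ z, dbar s z = regularizedInvNormSq χ f τ z • h z) ∧
      ∀ z ∈ closedBall 0 χ.rOut, ‖s z‖ ≤ c * B := by
  refine ⟨(2 * Real.pi)⁻¹ * ∫ ζ in closedBall (0 : ℂ) (2 * χ.rOut), ‖ζ⁻¹‖, by positivity,
    fun f h τ B hf hh hτ hB hle => ?_⟩
  have hsupport := support_regularizedInvNormSq_smul_subset χ f (τ := τ) h
  have hg : ContDiff ℝ 1 fun z => regularizedInvNormSq χ f τ z • h z :=
    (contDiff_regularizedInvNormSq χ hf hτ).smul hh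
  have hgs : HasCompactSupport fun z => regularizedInvNormSq χ f τ z • h z :=
    .of_support_subset_isCompact (isCompact_closedBall 0 χ.rOut) hsupport
  exact ⟨_, contDiff_cauchyTransform hg hgs, dbar_cauchyTransform hg hgs, fun z =>
    norm_cauchyTransform_le hB (norm_regularizedInvNormSq_smul_le χ f hτ hB hle) hsupport⟩

lemma sub_regularizedInvNormSq_smul_mul_conj_mul (hτ : 0 < τ) {z : ℂ}
    (hz : z ∈ closedBall 0 χ.rIn) (a : ℂ) :
    a - regularizedInvNormSq χ f τ z • (a * conj (f z)) * f z =
      regularizedInvNormSq χ f τ z • ((τ : ℂ) ^ 2 * a) := by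
  have hne : (‖f z‖ : ℂ) ^ 2 + (τ : ℂ) ^ 2 ≠ 0 := by
    exact_mod_cast (by positivity : 0 < ‖f z‖ ^ 2 + τ ^ 2).ne'
  have hconj : conj (f z) * f z = (‖f z‖ : ℂ) ^ 2 := conj_mul' _
  rw [regularizedInvNormSq, χ.one_of_mem_closedBall hz, real_smul, real_smul]
  push_cast
  field_simp
  linear_combination (-a) * hconj

end RegularizedInvNormSq

theorem exists_diffContOnCl_approx_of_norm_dbar_le {r R N : ℝ} (hr : 0 < r) (hrR : r < R)
    (hN : 0 ≤ N) : ∃ K > 0, ∀ f a : ℂ → ℂ, ContDiff ℝ 1 f → ContDiff ℝ 1 a →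
      (∀ z ∈ ball 0 r, dbar f z = a z) → (∀ z ∈ closedBall 0 R, ‖a z‖ ≤ N * ‖f z‖) →
      ∀ τ > 0, ∃ G : ℂ → ℂ, DiffContOnCl ℂ G (ball 0 r) ∧
        ∀ z ∈ closedBall 0 r, ‖G z‖ ≤ K * (‖f z‖ + τ) ∧ ‖f z‖ ≤ K * (‖G z‖ + τ) := by
  let χ : ContDiffBump (0 : ℂ) := ⟨r, R, hr, hrR⟩
  obtain ⟨c, hc, hsolve⟩ := exists_dbar_eq_regularizedInvNormSq_smul χ
  refine ⟨Real.exp (c * N) * (1 + c * Real.exp (c * N) * N), by positivity,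
    fun f a hf ha hdbar hle τ hτ => ?_⟩
  obtain ⟨s, hs, hdbars, hsN⟩ := hsolve f (fun z => a z * conj (f z)) τ N hf
    (ha.mul (conjCLE.contDiff.comp hf)) hτ hN fun z hz => by
      rw [norm_mul, norm_conj]
      nlinarith [mul_le_mul_of_nonneg_right (hle z hz) (norm_nonneg (f z)),
        mul_nonneg hN (sq_nonneg τ)]
  obtain ⟨t, ht, hdbart, htN⟩ := hsolve f (fun z => (τ : ℂ) ^ 2 * (exp (-s z) * a z)) τ
    (Real.exp (c * N) * N * τ) hf (contDiff_const.mul (hs.neg.cexp.mul ha)) hτ (by positivity)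
    fun z hz => norm_sq_mul_exp_neg_mul_le hN hτ.le (hsN z hz) (hle z hz)
  simp only [← mul_assoc c] at htN
  have hG : ContDiff ℝ 1 fun z => exp (-s z) * f z - t z := (hs.neg.cexp.mul hf).sub ht
  refine ⟨fun z => exp (-s z) * f z - t z, ⟨fun z hz => ?_, hG.continuous.continuousOn⟩,
    fun z hz => ?_⟩
  · refine (differentiableAt_complex_of_dbar_eq_zero (hG.differentiable one_ne_zero z)
      ?_).differentiableWithinAt
    rw [dbar_exp_neg_mul_sub (hs.differentiable one_ne_zero z) (hf.differentiable one_ne_zero z)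
      (ht.differentiable one_ne_zero z), hdbars, hdbart, hdbar z hz,
      sub_regularizedInvNormSq_smul_mul_conj_mul χ f hτ (ball_subset_closedBall hz)]
    simp only [real_smul]
    ring
  · have hzR : z ∈ closedBall 0 R := closedBall_subset_closedBall hrR.le hz
    exact ⟨norm_exp_neg_mul_sub_le (by positivity) (by positivity) hτ.le (hsN z hzR) (htN z hzR),
      norm_le_mul_norm_exp_neg_mul_sub_add (by positivity) hτ.le (hsN z hzR) (htN z hzR)⟩

end SimilarityPrinciple

section InteriorGradientEstimate

open Complex Metric InnerProductSpace Laplacian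
open scoped Topology

section SecondDerivatives

variable {E F : Type*} [NormedAddCommGroup E] [NormedAddCommGroup F] [NormedSpace ℝ F]

lemma laplacian_comp_add_left [InnerProductSpace ℝ E] [FiniteDimensional ℝ E] (f : E → F)
    (a z : E) : Δ (fun z => f (a + z)) z = Δ f (a + z) := by
  simp only [laplacian_eq_iteratedFDeriv_stdOrthonormalBasis, iteratedFDeriv_comp_add_left']

lemma fderiv_fderiv_apply [NormedSpace ℝ E] {f : E → F} (hf : ContDiff ℝ 2 f) (z v w : E) :
    fderiv ℝ (fun z => fderiv ℝ f z v) z w = fderiv ℝ (fderiv ℝ f) z w v := by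
  have hfderiv : DifferentiableAt ℝ (fderiv ℝ f) z :=
    (hf.fderiv_right one_add_one_eq_two.le).differentiable one_ne_zero z
  rw [(hfderiv.hasFDerivAt.clm_apply (hasFDerivAt_const v z)).fderiv]
  simp

lemma laplacian_eq_fderiv_fderiv (f : ℂ → F) (z : ℂ) :
    Δ f z = fderiv ℝ (fderiv ℝ f) z 1 1 + fderiv ℝ (fderiv ℝ f) z I I := by
  simp [laplacian_eq_iteratedFDeriv_complexPlane, iteratedFDeriv_two_apply]

end SecondDerivatives

/-- Twice the Wirtinger derivative `∂/∂z`, taken in the real sense. -/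
noncomputable def del (F : ℂ → ℂ) (z : ℂ) : ℂ := fderiv ℝ F z 1 - I * fderiv ℝ F z I

section WirtingerCalculus

variable {F : ℂ → ℂ}

lemma contDiff_dbar (hF : ContDiff ℝ 2 F) : ContDiff ℝ 1 (dbar F) := by
  have hfderiv : ContDiff ℝ 1 (fderiv ℝ F) := hF.fderiv_right one_add_one_eq_two.le
  exact (hfderiv.clm_apply contDiff_const).add
    (contDiff_const.mul (hfderiv.clm_apply contDiff_const))

lemma contDiff_del (hF : ContDiff ℝ 2 F) : ContDiff ℝ 1 (del F) := by
  have hfderiv : ContDiff ℝ 1 (fderiv ℝ F) := hF.fderiv_right one_add_one_eq_two.le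
  exact (hfderiv.clm_apply contDiff_const).sub
    (contDiff_const.mul (hfderiv.clm_apply contDiff_const))

lemma continuous_dbar (hF : ContDiff ℝ 1 F) : Continuous (dbar F) := by
  have hfderiv := hF.continuous_fderiv one_ne_zero
  exact (hfderiv.clm_apply continuous_const).add
    (continuous_const.mul (hfderiv.clm_apply continuous_const))

lemma continuous_del (hF : ContDiff ℝ 1 F) : Continuous (del F) := by
  have hfderiv := hF.continuous_fderiv one_ne_zero
  exact (hfderiv.clm_apply continuous_const).sub
    (continuous_const.mul (hfderiv.clm_apply continuous_const))

lemma support_dbar_subset (F : ℂ → ℂ) : Function.support (dbar F) ⊆ tsupport F := by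
  refine fun z hz => support_fderiv_subset ℝ fun hfderiv => hz ?_
  simp only [dbar, hfderiv, zero_apply, mul_zero, add_zero]

lemma support_del_subset (F : ℂ → ℂ) : Function.support (del F) ⊆ tsupport F := by
  refine fun z hz => support_fderiv_subset ℝ fun hfderiv => hz ?_
  simp only [del, hfderiv, zero_apply, mul_zero, sub_zero]

lemma dbar_mul {f g : ℂ → ℂ} {z : ℂ} (hf : DifferentiableAt ℝ f z) (hg : DifferentiableAt ℝ g z) :
    dbar (fun z => f z * g z) z = dbar f z * g z + f z * dbar g z := by
  simp only [dbar, fderiv_fun_mul hf hg, add_apply, smul_apply, smul_eq_mul]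
  ring

theorem dbar_del (hF : ContDiff ℝ 2 F) (z : ℂ) : dbar (del F) z = Δ F z := by
  have hdiff : ∀ v, DifferentiableAt ℝ (fun z => fderiv ℝ F z v) z := fun v =>
    ((hF.fderiv_right one_add_one_eq_two.le).clm_apply contDiff_const).differentiable one_ne_zero z
  have hderiv : ∀ w, fderiv ℝ (del F) z w =
      fderiv ℝ (fderiv ℝ F) z w 1 - I * fderiv ℝ (fderiv ℝ F) z w I := fun w => by
    rw [← fderiv_fderiv_apply hF, ← fderiv_fderiv_apply hF,
      show fderiv ℝ (del F) z = _ from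
        ((hdiff 1).hasFDerivAt.sub ((hdiff I).hasFDerivAt.const_mul I)).fderiv]
    rfl
  have hsymm : fderiv ℝ (fderiv ℝ F) z I 1 = fderiv ℝ (fderiv ℝ F) z 1 I :=
    hF.contDiffAt.isSymmSndFDerivAt (by simp) I 1
  rw [dbar, hderiv, hderiv, hsymm, laplacian_eq_fderiv_fderiv]
  linear_combination (-fderiv ℝ (fderiv ℝ F) z I I) * I_mul_I

theorem integral_mul_del {k : ℂ → ℂ} (hk : ContDiff ℝ 1 k) (hks : HasCompactSupport k)
    (hF : ContDiff ℝ 1 F) : ∫ z, k z * del F z = -∫ z, del k z * F z := by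
  have hFv : ∀ v, Continuous fun z => fderiv ℝ F z v := fun v =>
    (hF.continuous_fderiv one_ne_zero).clm_apply continuous_const
  have hkv : ∀ v, Continuous fun z => fderiv ℝ k z v := fun v =>
    (hk.continuous_fderiv one_ne_zero).clm_apply continuous_const
  have hint : ∀ v, Integrable fun z => k z * fderiv ℝ F z v := fun v =>
    (hk.continuous.mul (hFv v)).integrable_of_hasCompactSupport hks.mul_right
  have hint' : ∀ v, Integrable fun z => fderiv ℝ k z v * F z := fun v =>
    ((hkv v).mul hF.continuous).integrable_of_hasCompactSupport (hks.fderiv_apply ℝ v).mul_right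
  have hparts : ∀ v, ∫ z, k z * fderiv ℝ F z v = -∫ z, fderiv ℝ k z v * F z := fun v =>
    integral_mul_fderiv_eq_neg_fderiv_mul_of_integrable (hint' v) (hint v)
      ((hk.continuous.mul hF.continuous).integrable_of_hasCompactSupport hks.mul_right)
      (fun z _ => hk.differentiable one_ne_zero z) (fun z _ => hF.differentiable one_ne_zero z)
  simp only [del, mul_sub, sub_mul, mul_left_comm _ I, mul_assoc I]
  rw [integral_sub (hint _) ((hint _).const_mul _), integral_sub (hint' _) ((hint' _).const_mul _),
    integral_const_mul, integral_const_mul, hparts, hparts]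
  ring

end WirtingerCalculus

lemma norm_integral_mul_le_of_support_subset {X : Type*} [MeasurableSpace X] {μ : Measure X}
    {k f : X → ℂ} {s : Set X} {S : ℝ} (hk : Integrable k μ) (hks : Function.support k ⊆ s)
    (hf : ∀ x ∈ s, ‖f x‖ ≤ S) : ‖∫ x, k x * f x ∂μ‖ ≤ (∫ x, ‖k x‖ ∂μ) * S := by
  rw [← integral_mul_const]
  refine norm_integral_le_of_norm_le (hk.norm.mul_const S) (.of_forall fun x => ?_)
  by_cases hx : k x = 0
  · simp only [hx, zero_mul, norm_zero, le_refl]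
  · rw [norm_mul]
    gcongr
    exact hf x (hks hx)

lemma contDiff_mul_inv_of_eventuallyEq_zero {g : ℂ → ℂ} {n : WithTop ℕ∞} (hg : ContDiff ℝ n g)
    (h0 : g =ᶠ[𝓝 0] 0) : ContDiff ℝ n fun z => g z * z⁻¹ := by
  refine contDiff_iff_contDiffAt.2 fun z => ?_
  by_cases hz : z = 0
  · subst hz
    refine (contDiffAt_const (c := 0)).congr_of_eventuallyEq ?_
    filter_upwards [h0] with w hw
    rw [hw, Pi.zero_apply, zero_mul]
  · exact hg.contDiffAt.mul (contDiffAt_inv ℝ hz)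

/-- The cutoff of the Cauchy kernel in the interior gradient estimate. It vanishes near the
singularity of `z⁻¹`, because the bump function is constant there. -/
noncomputable def dbarBumpMulInv (χ : ContDiffBump (0 : ℂ)) (z : ℂ) : ℂ :=
  dbar (fun w => (χ w : ℂ)) z * z⁻¹

section DbarBumpMulInv

variable (χ : ContDiffBump (0 : ℂ))

lemma contDiff_ofReal_bump {n : ℕ∞} : ContDiff ℝ n fun z => (χ z : ℂ) :=
  ofRealCLM.contDiff.comp χ.contDiff

lemma tsupport_ofReal_bump_subset : tsupport (fun z => (χ z : ℂ)) ⊆ closedBall 0 χ.rOut := by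
  rw [← χ.tsupport_eq]
  exact closure_mono (Function.support_comp_subset ofReal_zero χ)

lemma contDiff_dbarBumpMulInv : ContDiff ℝ 1 (dbarBumpMulInv χ) := by
  refine contDiff_mul_inv_of_eventuallyEq_zero (contDiff_dbar (contDiff_ofReal_bump χ)) ?_
  have h1 : (fun z => (χ z : ℂ)) =ᶠ[𝓝 0] fun _ => 1 := by
    filter_upwards [χ.eventuallyEq_one] with z hz
    rw [hz, Pi.one_apply, ofReal_one]
  filter_upwards [h1.fderiv (𝕜 := ℝ)] with z hz
  simp [dbar, hz]

lemma tsupport_dbarBumpMulInv_subset : tsupport (dbarBumpMulInv χ) ⊆ closedBall 0 χ.rOut :=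
  closure_minimal (fun _ hz => tsupport_ofReal_bump_subset χ
    (support_dbar_subset _ (left_ne_zero_of_mul hz))) isClosed_closedBall

lemma hasCompactSupport_dbarBumpMulInv : HasCompactSupport (dbarBumpMulInv χ) :=
  (isCompact_closedBall 0 χ.rOut).of_isClosed_subset (isClosed_tsupport _)
    (tsupport_dbarBumpMulInv_subset χ)

lemma hasCompactSupport_ofReal_bump : HasCompactSupport fun z => (χ z : ℂ) :=
  (isCompact_closedBall 0 χ.rOut).of_isClosed_subset (isClosed_tsupport _)
    (tsupport_ofReal_bump_subset χ)

-- Pompeiu's formula for `χ * del F`; the derivatives of `F` of first order are integrated by parts.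
theorem two_pi_mul_del_zero {F : ℂ → ℂ} (hF : ContDiff ℝ 2 F) :
    -(2 * Real.pi) * del F 0 =
      -(∫ z, del (dbarBumpMulInv χ) z * F z) + ∫ z, χ z * z⁻¹ * dbar (del F) z := by
  have hχ : ContDiff ℝ 1 fun z => (χ z : ℂ) := contDiff_ofReal_bump χ
  have hχs := hasCompactSupport_ofReal_bump χ
  have hdel := contDiff_del hF
  have hpompeiu := integral_dbar_mul_inv (hχ.mul hdel) hχs.mul_right
  have hint : Integrable fun z => dbarBumpMulInv χ z * del F z :=
    ((contDiff_dbarBumpMulInv χ).continuous.mul hdel.continuous).integrable_of_hasCompactSupport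
      (hasCompactSupport_dbarBumpMulInv χ).mul_right
  have hint' : Integrable fun z => χ z * z⁻¹ * dbar (del F) z :=
    (locallyIntegrable_inv.integrable_smul_right_of_hasCompactSupport
      (hχ.continuous.mul (continuous_dbar hdel)) hχs.mul_right).congr (.of_forall fun z => by
        simp only [smul_eq_mul, Pi.mul_apply, mul_left_comm, mul_assoc])
  have hleibniz : ∀ z, dbar (fun z => χ z * del F z) z * z⁻¹ =
      dbarBumpMulInv χ z * del F z + χ z * z⁻¹ * dbar (del F) z := fun z => by
    rw [dbar_mul (hχ.differentiable one_ne_zero z) (hdel.differentiable one_ne_zero z),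
      dbarBumpMulInv]
    ring
  simp only [hleibniz] at hpompeiu
  rwa [integral_add hint hint', integral_mul_del (contDiff_dbarBumpMulInv χ)
    (hasCompactSupport_dbarBumpMulInv χ) (hF.of_le one_le_two), χ.eventuallyEq_one.eq_of_nhds,
    Pi.one_apply, ofReal_one, one_mul, eq_comm] at hpompeiu

end DbarBumpMulInv

theorem exists_norm_del_zero_le {ρ : ℝ} (hρ : 0 < ρ) :
    ∃ C ≥ 0, ∀ (F : ℂ → ℂ) (S T : ℝ), ContDiff ℝ 2 F → (∀ z ∈ closedBall 0 ρ, ‖F z‖ ≤ S) →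
      (∀ z ∈ closedBall 0 ρ, ‖Δ F z‖ ≤ T) → ‖del F 0‖ ≤ C * (S + T) := by
  let χ : ContDiffBump (0 : ℂ) := ⟨ρ / 2, ρ, half_pos hρ, half_lt_self hρ⟩
  set A := ∫ z, ‖del (dbarBumpMulInv χ) z‖
  set B := ∫ z, ‖χ z * z⁻¹‖
  have hA : 0 ≤ A := by positivity
  have hB : 0 ≤ B := by positivity
  refine ⟨(2 * Real.pi)⁻¹ * (A + B), by positivity, fun F S T hF hS hT => ?_⟩
  have hS0 : 0 ≤ S := (norm_nonneg _).trans (hS 0 (mem_closedBall_self hρ.le))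
  have hT0 : 0 ≤ T := (norm_nonneg _).trans (hT 0 (mem_closedBall_self hρ.le))
  have hint : Integrable (del (dbarBumpMulInv χ)) :=
    (continuous_del (contDiff_dbarBumpMulInv χ)).integrable_of_hasCompactSupport
      (.of_support_subset_isCompact (isCompact_closedBall 0 ρ)
        ((support_del_subset _).trans (tsupport_dbarBumpMulInv_subset χ)))
  have hint' : Integrable fun z => (χ z : ℂ) * z⁻¹ :=
    (locallyIntegrable_inv.integrable_smul_right_of_hasCompactSupport
      (contDiff_ofReal_bump χ (n := 0)).continuous (hasCompactSupport_ofReal_bump χ)).congr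
      (.of_forall fun z => by simp only [smul_eq_mul, mul_comm])
  have hle : 2 * Real.pi * ‖del F 0‖ ≤ A * S + B * T := by
    calc 2 * Real.pi * ‖del F 0‖ = ‖-(2 * Real.pi) * del F 0‖ := by
          rw [norm_mul, norm_neg, norm_mul, norm_real, Real.norm_of_nonneg Real.pi_pos.le,
            norm_ofNat]
      _ ≤ ‖∫ z, del (dbarBumpMulInv χ) z * F z‖ + ‖∫ z, χ z * z⁻¹ * dbar (del F) z‖ := by
          rw [two_pi_mul_del_zero χ hF]
          exact (norm_add_le _ _).trans_eq (by rw [norm_neg])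
      _ ≤ A * S + B * T := by
          refine add_le_add (norm_integral_mul_le_of_support_subset hint
            ((support_del_subset _).trans (tsupport_dbarBumpMulInv_subset χ)) hS)
            (norm_integral_mul_le_of_support_subset hint' (fun z hz => tsupport_ofReal_bump_subset χ
              (subset_tsupport _ (left_ne_zero_of_mul hz))) fun z hz => ?_)
          rw [dbar_del hF]
          exact hT z hz
  rw [mul_assoc, ← div_eq_inv_mul, le_div_iff₀ Real.two_pi_pos]
  nlinarith [mul_nonneg hA hT0, mul_nonneg hB hS0]

theorem exists_abs_fderiv_one_le {ρ : ℝ} (hρ : 0 < ρ) :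
    ∃ C ≥ 0, ∀ (Φ : ℂ → ℝ) (a : ℂ) (S T : ℝ), ContDiff ℝ 2 Φ →
      (∀ z ∈ closedBall a ρ, |Φ z| ≤ S) → (∀ z ∈ closedBall a ρ, |Δ Φ z| ≤ T) →
      |fderiv ℝ Φ a 1| ≤ C * (S + T) := by
  obtain ⟨C, hC, hdel⟩ := exists_norm_del_zero_le hρ
  refine ⟨C, hC, fun Φ a S T hΦ hS hT => ?_⟩
  have hmem : ∀ z ∈ closedBall (0 : ℂ) ρ, a + z ∈ closedBall a ρ := fun z hz => by
    rwa [mem_closedBall_iff_norm, add_sub_cancel_left, ← mem_closedBall_zero_iff]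
  have hΦa : ContDiff ℝ 2 fun z => Φ (a + z) := hΦ.comp (contDiff_const.add contDiff_id)
  have hle := hdel (ofRealCLM ∘ fun z => Φ (a + z)) S T (ofRealCLM.contDiff.comp hΦa)
    (fun z hz => by simpa using hS _ (hmem z hz)) fun z hz => by
      rw [hΦa.contDiffAt.laplacian_CLM_comp_left, Function.comp_apply, laplacian_comp_add_left]
      simpa using hT _ (hmem z hz)
  have hfderiv : fderiv ℝ (ofRealCLM ∘ fun z => Φ (a + z)) 0 = ofRealCLM.comp (fderiv ℝ Φ a) := by
    rw [fderiv_comp 0 ofRealCLM.differentiableAt (hΦa.differentiable two_ne_zero 0),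
      ofRealCLM.fderiv, fderiv_comp_add_left, add_zero]
  refine le_trans (le_of_eq ?_) ((abs_re_le_norm _).trans hle)
  simp [del, hfderiv]

end InteriorGradientEstimate

section Riccati

open scoped NNReal

theorem exists_contDiff_one_forall_mem_Icc_hasDerivAt {E : Type*} [NormedAddCommGroup E]
    [NormedSpace ℝ E] [CompleteSpace E] {v : ℝ → E → E} {K L : ℝ≥0}
    (hv : Continuous fun p : ℝ × E => v p.1 p.2) (hlip : ∀ t, LipschitzWith K (v t))
    (hbdd : ∀ t x, ‖v t x‖ ≤ L) {s T : ℝ} (hsT : s ≤ T) (x₀ : E) :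
    ∃ β : ℝ → E, ContDiff ℝ 1 β ∧ β s = x₀ ∧ ∀ t ∈ Icc s T, HasDerivAt β (v t (β t)) t := by
  have hpicard : IsPicardLindelof v (⟨s, left_mem_Icc.2 hsT⟩ : Icc s T) x₀
      (L * (T - s).toNNReal) 0 L K :=
    { lipschitzOnWith := fun t _ => (hlip t).lipschitzOnWith
      continuousOn := fun x _ => (hv.comp (by fun_prop : Continuous fun t => (t, x))).continuousOn
      norm_le := fun t _ x _ => hbdd t x
      mul_max_le := by simp [hsT] }
  obtain ⟨γ, hγs, hγ⟩ := hpicard.exists_eq_forall_mem_Icc_hasDerivWithinAt₀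
  have hγc : ContinuousOn γ (Icc s T) := fun t ht => (hγ t ht).continuousWithinAt
  set w : ℝ → E := fun t => v t (IccExtend hsT ((Icc s T).domRestrict γ) t)
  have hw : Continuous w :=
    hv.comp (continuous_id.prodMk (continuousOn_iff_continuous_domRestrict.1 hγc).Icc_extend')
  have hwγ : ∀ t ∈ Icc s T, w t = v t (γ t) := fun t ht => by
    simp only [w, IccExtend_of_mem _ _ ht, domRestrict_apply]
  have hderiv : ∀ t, HasDerivAt (fun t => x₀ + ∫ r in s..t, w r) (w t) t := fun t =>
    (hw.integral_hasStrictDerivAt s t).hasDerivAt.const_add x₀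
  have heq : ∀ t ∈ Icc s T, x₀ + ∫ r in s..t, w r = γ t := fun t ht => by
    rw [intervalIntegral.integral_eq_sub_of_hasDerivAt_of_le ht.1
      (hγc.mono (Icc_subset_Icc_right ht.2)) (fun r hr => ?_) (hw.intervalIntegrable _ _), hγs,
      add_sub_cancel]
    have hr' : r ∈ Icc s T := ⟨hr.1.le, hr.2.le.trans ht.2⟩
    rw [hwγ r hr']
    exact (hγ r hr').hasDerivAt (Icc_mem_nhds hr.1 (hr.2.trans_le ht.2))
  refine ⟨fun t => x₀ + ∫ r in s..t, w r, ?_, by simp, fun t ht => ?_⟩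
  · rw [contDiff_one_iff_deriv, funext fun t => (hderiv t).deriv]
    exact ⟨fun t => (hderiv t).differentiableAt, hw⟩
  · simpa only [heq t ht, ← hwγ t ht] using hderiv t

variable {V β : ℝ → ℝ} {N s T : ℝ}

lemma lipschitzWith_sub_sq_max_min (hN : 0 ≤ N) (t : ℝ) :
    LipschitzWith (2 * N).toNNReal fun x => V t - max 0 (min x N) ^ 2 := by
  refine LipschitzWith.of_dist_le' fun x y => ?_
  have hle : ∀ x, max 0 (min x N) ≤ N := fun x => max_le hN (min_le_right _ _)
  have hclamp : |max 0 (min x N) - max 0 (min y N)| ≤ |x - y| :=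
    calc _ ≤ |min x N - min y N| := by simpa using abs_max_sub_max_le_max 0 (min x N) 0 (min y N)
      _ ≤ |x - y| := by simpa using abs_min_sub_min_le_max x N y N
  rw [Real.dist_eq, Real.dist_eq, sub_sub_sub_cancel_left, sq_sub_sq, abs_mul,
    abs_of_nonneg (by positivity), abs_sub_comm _ (max 0 (min x N))]
  gcongr
  linarith [hle x, hle y]

lemma nonneg_of_hasDerivAt_sub_sq_max_min (hV : ∀ x, 0 ≤ V x) (hN : 0 ≤ N) (hβs : β s = 0)
    (hβ : ∀ t ∈ Icc s T, HasDerivAt β (V t - max 0 (min (β t) N) ^ 2) t) :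
    ∀ t ∈ Icc s T, 0 ≤ β t := by
  have hbarrier : ∀ ε > 0, ∀ ⦃t⦄, t ∈ Icc s T → -β t ≤ ε * (t - s + 1) := fun ε hε => by
    refine image_le_of_deriv_right_lt_deriv_boundary' (f := fun t => -β t)
      (fun t ht => (hβ t ht).continuousAt.continuousWithinAt.neg)
      (fun t ht => (hβ t (Ico_subset_Icc_self ht)).neg.hasDerivWithinAt)
      (by simp [hβs, hε.le]) (by fun_prop)
      (fun t _ => ((((hasDerivAt_id t).sub_const s).add_const 1).const_mul ε).hasDerivWithinAt)
      fun t ht hcontact => ?_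
    have hneg : β t ≤ 0 := by nlinarith [ht.1]
    rw [min_eq_left (hneg.trans hN), max_eq_left hneg]
    linarith [hV t]
  intro t ht
  have htends : Filter.Tendsto (fun ε => ε * (t - s + 1)) (nhdsWithin 0 (Ioi 0)) (nhds 0) := by
    simpa using (Filter.tendsto_id.mul_const (t - s + 1)).mono_left
      (nhdsWithin_le_nhds (a := (0 : ℝ)) (s := Ioi 0))
  linarith [ge_of_tendsto htends
    (eventually_mem_nhdsWithin.mono fun ε hε => hbarrier ε hε ht)]

lemma le_of_hasDerivAt_sub_sq_max_min (hVM : ∀ x, V x < N ^ 2) (hN : 0 ≤ N) (hβs : β s = 0)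
    (hβ : ∀ t ∈ Icc s T, HasDerivAt β (V t - max 0 (min (β t) N) ^ 2) t) :
    ∀ t ∈ Icc s T, β t ≤ N := by
  refine image_le_of_deriv_right_lt_deriv_boundary' (B := fun _ => N) (B' := fun _ => 0)
    (fun t ht => (hβ t ht).continuousAt.continuousWithinAt)
    (fun t ht => (hβ t (Ico_subset_Icc_self ht)).hasDerivWithinAt)
    (hβs.trans_le hN) continuousOn_const (fun t _ => hasDerivWithinAt_const _ _ _)
    fun t _ hcontact => ?_
  rw [hcontact, min_self, max_eq_right hN]
  linarith [hVM t]

theorem exists_contDiff_one_riccati (hV : Continuous V) (hV0 : ∀ x, 0 ≤ V x)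
    (hVN : ∀ x, V x < N ^ 2) (hN : 0 ≤ N) (hsT : s ≤ T) :
    ∃ β : ℝ → ℝ, ContDiff ℝ 1 β ∧
      ∀ t ∈ Icc s T, β t ∈ Icc 0 N ∧ HasDerivAt β (V t - β t ^ 2) t := by
  have hbdd : ∀ t x, ‖V t - max 0 (min x N) ^ 2‖ ≤ (N ^ 2).toNNReal := fun t x => by
    have hle : max 0 (min x N) ^ 2 ≤ N ^ 2 := by
      gcongr
      exact max_le hN (min_le_right _ _)
    rw [Real.coe_toNNReal _ (sq_nonneg N), Real.norm_eq_abs, abs_le]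
    constructor <;> linarith [hV0 t, hVN t, sq_nonneg (max 0 (min x N))]
  obtain ⟨β, hβC, hβs, hβ⟩ := exists_contDiff_one_forall_mem_Icc_hasDerivAt
    (by fun_prop) (lipschitzWith_sub_sq_max_min (V := V) hN) hbdd hsT 0
  refine ⟨β, hβC, fun t ht => ?_⟩
  have hβ0 := nonneg_of_hasDerivAt_sub_sq_max_min hV0 hN hβs hβ t ht
  have hβN := le_of_hasDerivAt_sub_sq_max_min hVN hN hβs hβ t ht
  refine ⟨⟨hβ0, hβN⟩, ?_⟩
  simpa only [min_eq_left hβN, max_eq_right hβ0] using hβ t ht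

end Riccati

section VerticalPrimitive

open Complex Metric

variable {F : Type*} [NormedAddCommGroup F] [NormedSpace ℝ F] {h : ℂ → F}

/-- The primitive of `h` along vertical lines which vanishes on the real axis. -/
noncomputable def verticalPrimitive (h : ℂ → F) (z : ℂ) : F :=
  ∫ t in (0 : ℝ)..z.im, h (z.re + t * I)

lemma verticalPrimitive_ofReal (h : ℂ → F) (x : ℝ) : verticalPrimitive h x = 0 := by
  simp only [verticalPrimitive, ofReal_im, intervalIntegral.integral_same]

lemma norm_verticalPrimitive_le {r C : ℝ} (hh : ∀ z ∈ closedBall 0 r, ‖h z‖ ≤ C) {z : ℂ}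
    (hz : z ∈ closedBall 0 r) : ‖verticalPrimitive h z‖ ≤ C * |z.im| := by
  rw [← sub_zero z.im]
  refine intervalIntegral.norm_integral_le_of_norm_le_const fun t ht => hh _ ?_
  have htz : |t| ≤ |z.im| := by
    simpa using abs_sub_left_of_mem_uIcc (uIoc_subset_uIcc ht)
  rw [mem_closedBall_zero_iff] at hz ⊢
  refine le_trans ?_ hz
  rw [norm_add_mul_I, norm_eq_sqrt_sq_add_sq]
  exact Real.sqrt_le_sqrt (by gcongr 1; exact sq_le_sq.2 htz)

lemma continuous_verticalPrimitive (hh : Continuous h) : Continuous (verticalPrimitive h) :=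
  intervalIntegral.continuous_parametric_intervalIntegral_of_continuous
    (f := fun (z : ℂ) t => h (z.re + t * I)) (by fun_prop) continuous_im

lemma hasDerivAt_comp_ofReal_add_mul_I (hh : ContDiff ℝ 1 h) (x t : ℝ) :
    HasDerivAt (fun s : ℝ => h (s + t * I)) (fderiv ℝ h (x + t * I) 1) x :=
  (hh.differentiable one_ne_zero _).hasFDerivAt.comp_hasDerivAt x
    (ofRealCLM.hasDerivAt.add_const _)

lemma hasDerivAt_comp_add_ofReal_mul_I (hh : ContDiff ℝ 1 h) (x t : ℝ) :
    HasDerivAt (fun s : ℝ => h (x + s * I)) (fderiv ℝ h (x + t * I) I) t := by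
  simpa [Function.comp_def] using (hh.differentiable one_ne_zero _).hasFDerivAt.comp_hasDerivAt t
    ((ofRealCLM.hasDerivAt.mul_const I).const_add (x : ℂ))

lemma hasDerivAt_integral_comp_add_mul_I (hh : ContDiff ℝ 1 h) (x y : ℝ) :
    HasDerivAt (fun s : ℝ => ∫ t in (0 : ℝ)..y, h (s + t * I))
      (∫ t in (0 : ℝ)..y, fderiv ℝ h (x + t * I) 1) x := by
  have hcont : Continuous h := hh.continuous
  have hcont' : Continuous fun z => fderiv ℝ h z 1 :=
    (hh.continuous_fderiv one_ne_zero).clm_apply continuous_const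
  obtain ⟨K, hK⟩ := ((isCompact_closedBall x 1).prod isCompact_uIcc).exists_bound_of_continuousOn
    (f := fun p : ℝ × ℝ => fderiv ℝ h (p.1 + p.2 * I) 1) (s := closedBall x 1 ×ˢ uIcc 0 y)
    (by fun_prop)
  exact (intervalIntegral.hasDerivAt_integral_of_dominated_loc_of_deriv_le
    (F := fun (s : ℝ) t => h (s + t * I)) (F' := fun s t => fderiv ℝ h (s + t * I) 1)
    (bound := fun _ => K) (closedBall_mem_nhds x one_pos)
    (.of_forall fun s => Continuous.aestronglyMeasurable (by fun_prop))
    (Continuous.intervalIntegrable (by fun_prop) _ _)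
    (Continuous.aestronglyMeasurable (by fun_prop))
    (.of_forall fun t ht s hs => hK (s, t) ⟨hs, uIoc_subset_uIcc ht⟩)
    intervalIntegrable_const
    (.of_forall fun t _ s _ => hasDerivAt_comp_ofReal_add_mul_I hh s t)).2

variable [CompleteSpace F]

lemma verticalPrimitive_fderiv_I (hh : ContDiff ℝ 1 h) (z : ℂ) :
    verticalPrimitive (fun w => fderiv ℝ h w I) z = h z - h z.re := by
  have hcont : Continuous fun w => fderiv ℝ h w I :=
    (hh.continuous_fderiv one_ne_zero).clm_apply continuous_const
  simpa [verticalPrimitive] using intervalIntegral.integral_eq_sub_of_hasDerivAt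
    (fun t _ => hasDerivAt_comp_add_ofReal_mul_I hh z.re t)
    ((by fun_prop : Continuous fun t : ℝ => fderiv ℝ h (z.re + t * I) I).intervalIntegrable 0 z.im)

theorem hasFDerivAt_verticalPrimitive (hh : ContDiff ℝ 1 h) (z : ℂ) :
    HasFDerivAt (verticalPrimitive h)
      (reCLM.smulRight (verticalPrimitive (fun w => fderiv ℝ h w 1) z) +
        imCLM.smulRight (h z)) z := by
  have hcont : Continuous h := hh.continuous
  have hcont' : Continuous fun w => fderiv ℝ h w 1 :=
    (hh.continuous_fderiv one_ne_zero).clm_apply continuous_const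
  have hstrict := hasStrictFDerivAt_uncurry_coprod (𝕜 := ℝ) (u := (z.re, z.im))
    (f := fun (x : ℝ) y => ∫ t in (0 : ℝ)..y, h (x + t * I))
    (f₁ := fun x y => .toSpanSingleton ℝ (∫ t in (0 : ℝ)..y, fderiv ℝ h (x + t * I) 1))
    (f₂ := fun x y => .toSpanSingleton ℝ (h (x + y * I)))
    (.of_forall fun p => (hasDerivAt_integral_comp_add_mul_I hh p.1 p.2).hasFDerivAt)
    (.of_forall fun p => ((by fun_prop : Continuous fun t : ℝ =>
      h (p.1 + t * I)).integral_hasStrictDerivAt 0 p.2).hasDerivAt.hasFDerivAt)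
    ((ContinuousLinearMap.toSpanSingletonCLE (𝕜 := ℝ) (E := F)).continuous.comp
      (intervalIntegral.continuous_parametric_intervalIntegral_of_continuous
        (f := fun (p : ℝ × ℝ) t => fderiv ℝ h (p.1 + t * I) 1) (by fun_prop)
        continuous_snd)).continuousAt
    ((ContinuousLinearMap.toSpanSingletonCLE (𝕜 := ℝ) (E := F)).continuous.comp
      (by fun_prop : Continuous fun p : ℝ × ℝ => h (p.1 + p.2 * I))).continuousAt
  refine (hstrict.hasFDerivAt.comp z (reCLM.prod imCLM).hasFDerivAt).congr_fderiv ?_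
  ext
  simp [verticalPrimitive, Function.HasUncurry.uncurry]

lemma contDiff_verticalPrimitive (hh : ContDiff ℝ 1 h) : ContDiff ℝ 1 (verticalPrimitive h) := by
  have hcont : Continuous fun w => fderiv ℝ h w 1 :=
    (hh.continuous_fderiv one_ne_zero).clm_apply continuous_const
  rw [contDiff_one_iff_fderiv, funext fun z => (hasFDerivAt_verticalPrimitive hh z).fderiv]
  refine ⟨fun z => (hasFDerivAt_verticalPrimitive hh z).differentiableAt, .add ?_ ?_⟩
  · exact ((ContinuousLinearMap.smulRightL ℝ ℂ F reCLM).continuous).comp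
      (continuous_verticalPrimitive hcont)
  · exact ((ContinuousLinearMap.smulRightL ℝ ℂ F imCLM).continuous).comp hh.continuous

end VerticalPrimitive

section BersVekua

open Complex Metric InnerProductSpace Laplacian
open scoped ComplexConjugate

/-- The complex function attached to a solution `Φ` of `ΔΦ = VΦ` and a solution `b` of the Riccati
equation `b' = V - b²`: its real part is `Φ`, and it solves the Bers–Vekua equation
`dbar f = b * conj f`. -/
noncomputable def bersVekua (b : ℝ → ℝ) (Φ : ℂ → ℝ) (z : ℂ) : ℂ :=
  Φ z + I * verticalPrimitive (fun w => fderiv ℝ Φ w 1 - b w.re * Φ w) z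

variable {b V : ℝ → ℝ} {Φ : ℂ → ℝ}

lemma abs_le_norm_bersVekua (b : ℝ → ℝ) (Φ : ℂ → ℝ) (z : ℂ) : |Φ z| ≤ ‖bersVekua b Φ z‖ := by
  simpa [bersVekua] using abs_re_le_norm (bersVekua b Φ z)

lemma norm_bersVekua_ofReal (b : ℝ → ℝ) (Φ : ℂ → ℝ) (x : ℝ) : ‖bersVekua b Φ x‖ = |Φ x| := by
  simp [bersVekua, verticalPrimitive_ofReal]

lemma contDiff_fderiv_one_sub_mul (hb : ContDiff ℝ 1 b) (hΦ : ContDiff ℝ 2 Φ) :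
    ContDiff ℝ 1 fun z => fderiv ℝ Φ z 1 - b z.re * Φ z :=
  ((hΦ.fderiv_right one_add_one_eq_two.le).clm_apply contDiff_const).sub
    ((hb.comp reCLM.contDiff).mul (hΦ.of_le one_le_two))

lemma contDiff_bersVekua (hb : ContDiff ℝ 1 b) (hΦ : ContDiff ℝ 2 Φ) :
    ContDiff ℝ 1 (bersVekua b Φ) :=
  (ofRealCLM.contDiff.comp (hΦ.of_le one_le_two)).add (contDiff_const.mul
    (ofRealCLM.contDiff.comp (contDiff_verticalPrimitive (contDiff_fderiv_one_sub_mul hb hΦ))))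

lemma dbar_ofReal_add_I_mul_ofReal {u v : ℂ → ℝ} {z : ℂ} (hu : DifferentiableAt ℝ u z)
    (hv : DifferentiableAt ℝ v z) :
    dbar (fun w => u w + I * v w) z =
      ((fderiv ℝ u z 1 - fderiv ℝ v z I : ℝ) : ℂ) +
        I * ((fderiv ℝ v z 1 + fderiv ℝ u z I : ℝ) : ℂ) := by
  have hfderiv := ((ofRealCLM.hasFDerivAt.comp z hu.hasFDerivAt).add
    ((ofRealCLM.hasFDerivAt.comp z hv.hasFDerivAt).const_mul I)).fderiv
  rw [dbar, show fderiv ℝ (fun w => (u w : ℂ) + I * v w) z = _ from hfderiv]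
  simp only [add_apply, smul_apply, ContinuousLinearMap.comp_apply, ofRealCLM_apply, smul_eq_mul,
    ofReal_add, ofReal_sub]
  linear_combination (fderiv ℝ v z I : ℂ) * I_mul_I

lemma fderiv_one_fderiv_one_sub_mul {z : ℂ} (hb : HasDerivAt b (V z.re - b z.re ^ 2) z.re)
    (hΦ : ContDiff ℝ 2 Φ) (hΔ : Δ Φ z = V z.re * Φ z) :
    fderiv ℝ (fun w => fderiv ℝ Φ w 1 - b w.re * Φ w) z 1 =
      -fderiv ℝ (fun w => fderiv ℝ Φ w I) z I - b z.re * (fderiv ℝ Φ z 1 - b z.re * Φ z) := by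
  have hdiff := (hΦ.differentiable two_ne_zero z).hasFDerivAt
  have hdiff' := (((hΦ.fderiv_right one_add_one_eq_two.le).clm_apply
    contDiff_const).differentiable one_ne_zero z : DifferentiableAt ℝ (fun w => fderiv ℝ Φ w 1) z)
  have hfderiv := (hdiff'.hasFDerivAt.sub
    ((hb.comp_hasFDerivAt z reCLM.hasFDerivAt).mul hdiff)).fderiv
  rw [laplacian_eq_fderiv_fderiv, ← fderiv_fderiv_apply hΦ, ← fderiv_fderiv_apply hΦ] at hΔ
  rw [show fderiv ℝ (fun w => fderiv ℝ Φ w 1 - b w.re * Φ w) z = _ from hfderiv]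
  simp only [sub_apply, add_apply, smul_apply, smul_eq_mul, reCLM_apply, one_re, mul_one,
    Function.comp_apply]
  linear_combination hΔ

theorem dbar_bersVekua (hb : ContDiff ℝ 1 b) (hΦ : ContDiff ℝ 2 Φ)
    (hΔ : ∀ z, Δ Φ z = V z.re * Φ z) (hneumann : ∀ x : ℝ, fderiv ℝ Φ x I = 0) {z : ℂ}
    (hriccati : HasDerivAt b (V z.re - b z.re ^ 2) z.re) :
    dbar (bersVekua b Φ) z = b z.re * conj (bersVekua b Φ z) := by
  set h : ℂ → ℝ := fun w => fderiv ℝ Φ w 1 - b w.re * Φ w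
  have hh : ContDiff ℝ 1 h := contDiff_fderiv_one_sub_mul hb hΦ
  have hΦI : ContDiff ℝ 1 fun w => fderiv ℝ Φ w I :=
    (hΦ.fderiv_right one_add_one_eq_two.le).clm_apply contDiff_const
  have hΦII : Continuous fun w => fderiv ℝ (fun w => fderiv ℝ Φ w I) w I :=
    (hΦI.continuous_fderiv one_ne_zero).clm_apply continuous_const
  have hhc : Continuous h := hh.continuous
  have hvertical : verticalPrimitive (fun w => fderiv ℝ h w 1) z =
      -fderiv ℝ Φ z I - b z.re * verticalPrimitive h z := by
    calc _ = -verticalPrimitive (fun w => fderiv ℝ (fun w => fderiv ℝ Φ w I) w I) z -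
          b z.re * verticalPrimitive h z := by
            simp only [verticalPrimitive]
            rw [← intervalIntegral.integral_neg, ← intervalIntegral.integral_const_mul,
              ← intervalIntegral.integral_sub]
            · refine intervalIntegral.integral_congr fun t _ => ?_
              have hre : (z.re + t * I : ℂ).re = z.re := by simp
              have hderiv := fderiv_one_fderiv_one_sub_mul (by rwa [hre]) hΦ (hΔ (z.re + t * I))
              simpa only [h, hre] using hderiv
            · exact Continuous.intervalIntegrable (by fun_prop) _ _
            · exact Continuous.intervalIntegrable (by fun_prop) _ _
      _ = _ := by rw [verticalPrimitive_fderiv_I hΦI, hneumann, sub_zero]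
  have hq := hasFDerivAt_verticalPrimitive hh z
  rw [show bersVekua b Φ = fun w => Φ w + I * verticalPrimitive h w from rfl,
    dbar_ofReal_add_I_mul_ofReal (hΦ.differentiable two_ne_zero z) hq.differentiableAt, hq.fderiv]
  simp only [hvertical, add_apply, ContinuousLinearMap.smulRight_apply, reCLM_apply, imCLM_apply,
    I_re, I_im, one_re, one_im, smul_eq_mul, zero_mul, one_mul, zero_add, add_zero, sub_sub_cancel,
    ofReal_mul, ofReal_add, ofReal_sub, ofReal_neg, map_add, map_mul, conj_ofReal, conj_I, neg_mul,
    h]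
  ring

end BersVekua

section DiscPropagation

open Complex Metric InnerProductSpace Laplacian
open scoped ComplexConjugate

variable {r ρ R M N m : ℝ}

theorem exists_norm_le_rpow_of_norm_dbar_le (hr : 0 < r) (hrρ : r < ρ) (hρR : ρ < R) (hN : 0 ≤ N)
    (hm : 0 < m) : ∃ α ∈ Ioo (0 : ℝ) 1, ∃ C > 0, ∀ (f a : ℂ → ℂ) (E : Set ℝ) (S δ : ℝ),
      ContDiff ℝ 1 f → ContDiff ℝ 1 a → (∀ z ∈ ball 0 ρ, dbar f z = a z) →
      (∀ z ∈ closedBall 0 R, ‖a z‖ ≤ N * ‖f z‖) → (∀ z ∈ closedBall 0 ρ, ‖f z‖ ≤ S) →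
      E ⊆ Icc (-r) r → ENNReal.ofReal m ≤ volume E → (∀ x ∈ E, ‖f x‖ ≤ δ) →
      ∀ z ∈ closedBall 0 r, ‖f z‖ ≤ C * δ ^ α * S ^ (1 - α) := by
  obtain ⟨α, hα, C, hC, hholo⟩ := exists_norm_le_rpow_of_volume_le hr hrρ hm
  obtain ⟨K, hK, hsim⟩ := exists_diffContOnCl_approx_of_norm_dbar_le (hr.trans hrρ) hρR hN
  refine ⟨α, hα, K * C * K, by positivity, fun f a E S δ hf ha hdbar hle hS hE hvol hδ z hz => ?_⟩
  obtain ⟨x, hx⟩ : E.Nonempty :=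
    nonempty_of_measure_ne_zero ((ENNReal.ofReal_pos.2 hm).trans_le hvol).ne'
  have hδ0 : 0 ≤ δ := (norm_nonneg _).trans (hδ x hx)
  have hS0 : 0 ≤ S := (norm_nonneg _).trans (hS 0 (mem_closedBall_self (hr.trans hrρ).le))
  have happrox : ∀ τ > 0,
      ‖f z‖ ≤ K * (C * (K * (δ + τ)) ^ α * (K * (S + τ)) ^ (1 - α) + τ) := fun τ hτ => by
    obtain ⟨G, hG, hfG⟩ := hsim f a hf ha hdbar hle τ hτ
    have hGz := hholo G E (K * (S + τ)) (K * (δ + τ)) hG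
      (fun w hw => (hfG w hw).1.trans (by gcongr; exact hS w hw)) hE hvol
      (fun x hx => (hfG x ?_).1.trans (by gcongr; exact hδ x hx)) z (mem_closedBall_zero_iff.1 hz)
    · refine (hfG z (closedBall_subset_closedBall hrρ.le hz)).2.trans ?_
      gcongr
    · rw [mem_closedBall_zero_iff, norm_real]
      exact (abs_le.2 (hE hx)).trans hrρ.le
  have hcont : Continuous fun τ => K * (C * (K * (δ + τ)) ^ α * (K * (S + τ)) ^ (1 - α) + τ) := by
    have h1 := Real.continuous_rpow_const hα.1.le
    have h2 := Real.continuous_rpow_const (sub_nonneg.2 hα.2.le)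
    fun_prop
  have hlim := (hcont.tendsto 0).mono_left (nhdsWithin_le_nhds (s := Ioi 0))
  refine (ge_of_tendsto hlim (eventually_mem_nhdsWithin.mono fun τ hτ => happrox τ hτ)).trans_eq ?_
  have hKα : K ^ α * K ^ (1 - α) = K := by
    rw [← Real.rpow_add hK, add_sub_cancel, Real.rpow_one]
  rw [add_zero, add_zero, add_zero, Real.mul_rpow hK.le hδ0, Real.mul_rpow hK.le hS0]
  linear_combination K * C * δ ^ α * S ^ (1 - α) * hKα

theorem exists_norm_bersVekua_le (hr : 0 ≤ r) (hrR : r < R) (hM : 0 ≤ M) (hN : 0 ≤ N) :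
    ∃ C > 0, ∀ (b : ℝ → ℝ) (Φ : ℂ → ℝ) (S : ℝ), (∀ x ∈ Icc (-r) r, |b x| ≤ N) →
      ContDiff ℝ 2 Φ → (∀ z ∈ closedBall 0 R, |Φ z| ≤ S) →
      (∀ z ∈ closedBall 0 R, |Δ Φ z| ≤ M * S) →
      ∀ z ∈ closedBall 0 r, ‖bersVekua b Φ z‖ ≤ C * S := by
  obtain ⟨C, hC, hgrad⟩ := exists_abs_fderiv_one_le (sub_pos.2 hrR)
  refine ⟨1 + (C * (1 + M) + N) * r, by positivity, fun b Φ S hb hΦ hS hΔ z hz => ?_⟩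
  have hS0 : 0 ≤ S := (abs_nonneg _).trans (hS 0 (mem_closedBall_self (hr.trans hrR.le)))
  have hh : ∀ w ∈ closedBall (0 : ℂ) r,
      ‖fderiv ℝ Φ w 1 - b w.re * Φ w‖ ≤ (C * (1 + M) + N) * S := fun w hw => by
    have hsub : closedBall w (R - r) ⊆ closedBall 0 R :=
      closedBall_subset_closedBall' (by linarith [mem_closedBall.1 hw])
    have hΦw : |Φ w| ≤ S := hS w (closedBall_subset_closedBall hrR.le hw)
    have hgradw := hgrad Φ w S (M * S) hΦ (fun v hv => hS v (hsub hv)) fun v hv => hΔ v (hsub hv)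
    have hbw := hb w.re (abs_le.1 ((abs_re_le_norm w).trans (mem_closedBall_zero_iff.1 hw)))
    calc _ ≤ |fderiv ℝ Φ w 1| + |b w.re| * |Φ w| := by
          rw [Real.norm_eq_abs, ← abs_mul]
          exact abs_sub _ _
      _ ≤ C * (S + M * S) + N * S := by gcongr
      _ = (C * (1 + M) + N) * S := by ring
  have him : |z.im| ≤ r := (abs_im_le_norm z).trans (mem_closedBall_zero_iff.1 hz)
  calc ‖bersVekua b Φ z‖
      ≤ |Φ z| + ‖verticalPrimitive (fun w => fderiv ℝ Φ w 1 - b w.re * Φ w) z‖ := by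
        refine (norm_add_le _ _).trans_eq ?_
        rw [norm_mul, norm_I, one_mul, norm_real, norm_real, Real.norm_eq_abs]
    _ ≤ S + (C * (1 + M) + N) * S * r := by
        refine add_le_add (hS z (closedBall_subset_closedBall hrR.le hz))
          ((norm_verticalPrimitive_le hh hz).trans ?_)
        gcongr
    _ = _ := by ring

theorem exists_abs_le_rpow_of_laplacian_eq (hr : 0 < r) (hrR : r < R) (hM : 0 ≤ M) (hm : 0 < m) :
    ∃ α ∈ Ioo (0 : ℝ) 1, ∃ C > 0, ∀ (V : ℝ → ℝ) (Φ : ℂ → ℝ) (E : Set ℝ) (S δ : ℝ),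
      Continuous V → (∀ x, V x ∈ Icc 0 M) → ContDiff ℝ 2 Φ → (∀ z, Δ Φ z = V z.re * Φ z) →
      (∀ x : ℝ, fderiv ℝ Φ x I = 0) → (∀ z ∈ closedBall 0 R, |Φ z| ≤ S) →
      E ⊆ Icc (-r) r → ENNReal.ofReal m ≤ volume E → (∀ x ∈ E, |Φ (x : ℝ)| ≤ δ) →
      ∀ z ∈ closedBall 0 r, |Φ z| ≤ C * δ ^ α * S ^ (1 - α) := by
  obtain ⟨ρ, hrρ, hρR⟩ := exists_between hrR
  have hR : 0 < R := hr.trans hrR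
  obtain ⟨α, hα, C, hC, hprop⟩ :=
    exists_norm_le_rpow_of_norm_dbar_le hr hrρ hρR (by positivity : 0 ≤ M + 1) hm
  obtain ⟨C', hC', hbound⟩ :=
    exists_norm_bersVekua_le (hr.trans hrρ).le hρR hM (by positivity : 0 ≤ M + 1)
  refine ⟨α, hα, C * C' ^ (1 - α), by positivity,
    fun V Φ E S δ hV hV0 hΦ hΔ hneumann hS hE hvol hδ z hz => ?_⟩
  obtain ⟨b, hb, hriccati⟩ := exists_contDiff_one_riccati hV (fun x => (hV0 x).1)
    (N := M + 1) (fun x => by nlinarith [(hV0 x).2]) (by positivity) (neg_le_self hR.le)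
  have hbM : ∀ x ∈ Icc (-R) R, |b x| ≤ M + 1 := fun x hx =>
    (abs_of_nonneg (hriccati x hx).1.1).trans_le (hriccati x hx).1.2
  have hre : ∀ w ∈ closedBall (0 : ℂ) R, w.re ∈ Icc (-R) R := fun w hw =>
    abs_le.1 ((abs_re_le_norm w).trans (mem_closedBall_zero_iff.1 hw))
  have hS0 : 0 ≤ S := (abs_nonneg _).trans (hS 0 (mem_closedBall_self hR.le))
  have hΔS : ∀ w ∈ closedBall (0 : ℂ) R, |Δ Φ w| ≤ M * S := fun w hw => by
    rw [hΔ, abs_mul, abs_of_nonneg (hV0 _).1]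
    exact mul_le_mul (hV0 _).2 (hS w hw) (abs_nonneg _) hM
  have hf : ContDiff ℝ 1 (bersVekua b Φ) := contDiff_bersVekua hb hΦ
  calc |Φ z| ≤ ‖bersVekua b Φ z‖ := abs_le_norm_bersVekua b Φ z
    _ ≤ C * δ ^ α * (C' * S) ^ (1 - α) := by
        refine hprop _ (fun w => b w.re * conj (bersVekua b Φ w)) E _ δ hf
          ((ofRealCLM.contDiff.comp (hb.comp reCLM.contDiff)).mul (conjCLE.contDiff.comp hf))
          (fun w hw => dbar_bersVekua hb hΦ hΔ hneumann (hriccati _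
            (hre w (ball_subset_closedBall (ball_subset_ball hρR.le hw)))).2) (fun w hw => ?_)
          (hbound b Φ S (fun x hx => hbM x (Icc_subset_Icc (by linarith) hρR.le hx)) hΦ hS hΔS)
          hE hvol (fun x hx => (norm_bersVekua_ofReal b Φ x).trans_le (hδ x hx)) z hz
        rw [norm_mul, norm_real, norm_conj]
        gcongr
        exact hbM _ (hre w hw)
    _ = _ := by
        rw [Real.mul_rpow hC'.le hS0]
        ring

end DiscPropagation

section Chebyshev

variable {X : Type*} [MeasurableSpace X] {μ : Measure X} {f : X → ℝ} {s : Set X} {m : ℝ}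

lemma measureReal_setOf_lt_sq_le (hm : 0 < m) (hf : Integrable (fun x => f x ^ 2) μ) :
    μ.real {x | 2 / m * ∫ x, f x ^ 2 ∂μ < f x ^ 2} ≤ m / 2 := by
  set I := ∫ x, f x ^ 2 ∂μ
  set B := {x | 2 / m * I < f x ^ 2}
  have hI : 0 ≤ I := integral_nonneg fun x => sq_nonneg (f x)
  by_contra! hB
  have hB0 : μ B ≠ 0 := fun h => by
    rw [measureReal_def, h, ENNReal.toReal_zero] at hB
    linarith
  have hlt : μ.real B * (2 / m * I) < I :=
    (setIntegral_gt_gt (by positivity) hf.integrableOn hB0).trans_le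
      (setIntegral_le_integral hf (.of_forall fun x => sq_nonneg (f x)))
  have hge : m / 2 * (2 / m * I) ≤ μ.real B * (2 / m * I) := by gcongr
  have hcancel : m / 2 * (2 / m * I) = I := by field_simp
  linarith

theorem exists_subset_le_measure_forall_abs_le (hm : 0 < m) (hmeas : Measurable f)
    (hf : IntegrableOn (fun x => f x ^ 2) s μ) (hs : μ s ≠ ⊤) (hms : ENNReal.ofReal m ≤ μ s) :
    ∃ t ⊆ s, ENNReal.ofReal (m / 2) ≤ μ t ∧
      ∀ x ∈ t, |f x| ≤ √(2 / m) * √(∫ x in s, f x ^ 2 ∂μ) := by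
  set B := {x | 2 / m * ∫ x in s, f x ^ 2 ∂μ < f x ^ 2}
  have hB : MeasurableSet B := measurableSet_lt measurable_const (hmeas.pow_const 2)
  have hbad : μ.real (B ∩ s) ≤ m / 2 :=
    (measureReal_restrict_apply hB).symm.trans_le (measureReal_setOf_lt_sq_le hm hf)
  refine ⟨s \ B, sdiff_subset, ?_, fun x hx => ?_⟩
  · have hsum := measureReal_sdiff_add_inter hB hs
    rw [inter_comm] at hsum
    have hle := (ENNReal.ofReal_le_iff_le_toReal hs).1 hms
    rw [ENNReal.ofReal_le_iff_le_toReal (measure_ne_top_of_subset sdiff_subset hs)]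
    simp only [measureReal_def] at hsum hbad
    linarith
  · rw [← Real.sqrt_mul (by positivity)]
    exact Real.abs_le_sqrt (not_lt.1 hx.2)

end Chebyshev

section Rectangles

open Complex Metric InnerProductSpace Laplacian

lemma le_biSup_of_isCompact {X α : Type*} [TopologicalSpace X] [ConditionallyCompleteLinearOrder α]
    [TopologicalSpace α] [OrderTopology α] [Nonempty α] {s : Set X} {f : X → α} {x : X}
    (hs : IsCompact s) (hf : ContinuousOn f s) (hx : x ∈ s) : f x ≤ ⨆ x ∈ s, f x := by
  refine le_ciSup₂ (f := fun x _ => f x) ((hs.bddAbove_image hf).mono ?_) x hx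
  rintro _ ⟨_, ⟨y, rfl⟩, hy, rfl⟩
  exact mem_image_of_mem f hy

lemma sqrt_setIntegral_sq_le {X : Type*} [MeasurableSpace X] {μ : Measure X} {s : Set X}
    {f : X → ℝ} {B : ℝ} (hs : μ s ≠ ⊤) (hB : 0 ≤ B) (hf : ∀ x ∈ s, |f x| ≤ B) :
    √(∫ x in s, f x ^ 2 ∂μ) ≤ B * √(μ.real s) := by
  have hbound : ∫ x in s, f x ^ 2 ∂μ ≤ B ^ 2 * μ.real s :=
    (Real.le_norm_self _).trans <| norm_setIntegral_le_of_norm_le_const hs.lt_top fun x hx => by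
      rw [norm_pow]
      exact pow_le_pow_left₀ (norm_nonneg _) (hf x hx) 2
  rw [← Real.sqrt_sq hB, ← Real.sqrt_mul (sq_nonneg B)]
  exact Real.sqrt_le_sqrt hbound

lemma laplacian_eq_deriv_deriv_add {F : Type*} [NormedAddCommGroup F] [NormedSpace ℝ F] {f : ℂ → F}
    (hf : ContDiff ℝ 2 f) (x y : ℝ) :
    Δ f (x + y * I) =
      deriv (deriv fun s : ℝ => f (s + y * I)) x + deriv (deriv fun s : ℝ => f (x + s * I)) y := by
  have hd : ∀ v, ContDiff ℝ 1 fun z => fderiv ℝ f z v := fun v =>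
    (hf.fderiv_right (m := 1) le_rfl).clm_apply contDiff_const
  have hre : (deriv fun s : ℝ => f (s + y * I)) = fun s : ℝ => fderiv ℝ f (s + y * I) 1 :=
    funext fun s => (hasDerivAt_comp_ofReal_add_mul_I (hf.of_le one_le_two) s y).deriv
  have him : (deriv fun s : ℝ => f (x + s * I)) = fun s : ℝ => fderiv ℝ f (x + s * I) I :=
    funext fun s => (hasDerivAt_comp_add_ofReal_mul_I (hf.of_le one_le_two) x s).deriv
  rw [hre, him, (hasDerivAt_comp_ofReal_add_mul_I (hd 1) x y).deriv,
    (hasDerivAt_comp_add_ofReal_mul_I (hd I) x y).deriv, fderiv_fderiv_apply hf,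
    fderiv_fderiv_apply hf, laplacian_eq_fderiv_fderiv]

variable {M m : ℝ}

theorem exists_abs_le_rpow_of_rectangle (hM : 0 ≤ M) (hm : 0 < m) :
    ∃ α ∈ Ioo (0 : ℝ) 1, ∃ C > 0, ∀ (V : ℝ → ℝ) (φ : ℝ × ℝ → ℝ) (ℓ S δ : ℝ) (E : Set ℝ),
      Continuous V → (∀ x, V x ∈ Icc 0 M) → ContDiff ℝ 2 φ →
      (∀ x y, deriv (deriv fun s => φ (s, y)) x + deriv (deriv fun s => φ (x, s)) y =
        V x * φ (x, y)) →
      (∀ x, deriv (fun s => φ (x, s)) 0 = 0) →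
      (∀ z ∈ Icc (ℓ - 1) (ℓ + 2) ×ˢ Icc (-(3 / 2)) (3 / 2), |φ z| ≤ S) →
      E ⊆ Icc ℓ (ℓ + 1) → ENNReal.ofReal m ≤ volume E → (∀ x ∈ E, |φ (x, 0)| ≤ δ) →
      ∀ z ∈ Icc ℓ (ℓ + 1) ×ˢ Icc (-(1 / 2)) (1 / 2), |φ z| ≤ C * δ ^ α * S ^ (1 - α) := by
  obtain ⟨α, hα, C, hC, hprop⟩ := exists_abs_le_rpow_of_laplacian_eq (r := 3 / 4) (R := 3 / 2)
    (by norm_num) (by norm_num) hM hm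
  refine ⟨α, hα, C, hC, fun V φ ℓ S δ E hV hV0 hφ hpde hneumann hS hE hvol hδ => ?_⟩
  rintro ⟨x, y⟩ ⟨⟨hx₀, hx₁⟩, hy₀, hy₁⟩
  set c := ℓ + 1 / 2
  set Φ : ℂ → ℝ := fun z => φ (z.re + c, z.im)
  have hΦ : ContDiff ℝ 2 Φ :=
    hφ.comp ((reCLM.contDiff.add contDiff_const).prodMk imCLM.contDiff)
  have hΔ : ∀ z, Δ Φ z = V (z.re + c) * Φ z := fun z => by
    rw [← hpde, ← deriv_comp_add_const, ← funext fun s => deriv_comp_add_const _ c s, ← re_add_im z,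
      laplacian_eq_deriv_deriv_add hΦ]
    simp [Φ]
  have hΦI : ∀ x : ℝ, fderiv ℝ Φ x I = 0 := fun x => by
    simpa [Φ, hneumann] using
      (hasDerivAt_comp_add_ofReal_mul_I (hΦ.of_le one_le_two) x 0).deriv.symm
  have hΦS : ∀ z ∈ closedBall 0 (3 / 2), |Φ z| ≤ S := fun z hz => by
    have hre := abs_le.1 ((abs_re_le_norm z).trans (mem_closedBall_zero_iff.1 hz))
    have him := abs_le.1 ((abs_im_le_norm z).trans (mem_closedBall_zero_iff.1 hz))
    exact hS _ ⟨⟨by grind, by grind⟩, him⟩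
  have hz : ((x - c : ℝ) + y * I : ℂ) ∈ closedBall 0 (3 / 4) := by
    rw [mem_closedBall_zero_iff, norm_add_mul_I]
    have hxc : (x - c) ^ 2 ≤ (1 / 2) ^ 2 := sq_le_sq' (by grind) (by grind)
    have hy : y ^ 2 ≤ (1 / 2) ^ 2 := sq_le_sq' hy₀ hy₁
    exact Real.sqrt_le_iff.2 ⟨by norm_num, by linarith⟩
  have hle := hprop (fun x => V (x + c)) Φ ((· + c) ⁻¹' E) S δ (by fun_prop) (fun x => hV0 _) hΦ hΔ
    hΦI hΦS (fun x hx => ⟨by grind [hE hx], by grind [hE hx]⟩)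
    (by rwa [measure_preimage_add_right]) (fun x hx => by simpa [Φ] using hδ _ hx) _ hz
  simpa [Φ] using hle

theorem l2_propagation_neumann_general (hM : 0 ≤ M) (hm : 0 < m) :
    ∃ α ∈ Ioo (0 : ℝ) 1, ∃ C > 0, ∀ V : ℝ → ℝ, Continuous V → (∀ x, V x ∈ Icc 0 M) →
      ∀ (ℓ : ℝ) (ω : Set ℝ), ω ⊆ Icc ℓ (ℓ + 1) → ENNReal.ofReal m ≤ volume ω →
      ∀ φ : ℝ × ℝ → ℝ, ContDiff ℝ 2 φ →
        (∀ x y, -(deriv (deriv fun s => φ (s, y)) x + deriv (deriv fun s => φ (x, s)) y) +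
          V x * φ (x, y) = 0) →
        (∀ x, deriv (fun s => φ (x, s)) 0 = 0) →
        √(∫ z in Icc ℓ (ℓ + 1) ×ˢ Icc (-(1 / 2)) (1 / 2), φ z ^ 2) ≤
          C * √(∫ x in ω, φ (x, 0) ^ 2) ^ α *
            (⨆ z ∈ Icc (ℓ - 1) (ℓ + 2) ×ˢ Icc (-(3 / 2)) (3 / 2), |φ z|) ^ (1 - α) := by
  obtain ⟨α, hα, C, hC, hprop⟩ := exists_abs_le_rpow_of_rectangle hM (half_pos hm)
  refine ⟨α, hα, C * √(2 / m) ^ α, by positivity, fun V hV hV0 ℓ ω hω hvol φ hφ hpde hneu => ?_⟩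
  set S := ⨆ z ∈ Icc (ℓ - 1) (ℓ + 2) ×ˢ Icc (-(3 / 2)) (3 / 2), |φ z|
  set δ := √(∫ x in ω, φ (x, 0) ^ 2)
  have hS : 0 ≤ S := Real.iSup_nonneg fun z => Real.iSup_nonneg fun _ => abs_nonneg _
  have htrace : Continuous fun x => φ (x, 0) := hφ.continuous.comp (by fun_prop)
  obtain ⟨E, hE, hvolE, hδ⟩ := exists_subset_le_measure_forall_abs_le hm htrace.measurable
    (((htrace.pow 2).integrableOn_Icc).mono_set hω)
    (measure_ne_top_of_subset hω measure_Icc_lt_top.ne) hvol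
  have hsup := hprop V φ ℓ S _ E hV hV0 hφ (fun x y => by linarith [hpde x y]) hneu
    (fun z hz => le_biSup_of_isCompact (isCompact_Icc.prod isCompact_Icc)
      hφ.continuous.abs.continuousOn hz) (hE.trans hω) hvolE hδ
  have hvolD : volume.real (Icc ℓ (ℓ + 1) ×ˢ Icc (-(1 / 2) : ℝ) (1 / 2)) = 1 := by
    rw [Measure.volume_eq_prod, measureReal_prod_prod, Real.volume_real_Icc, Real.volume_real_Icc]
    norm_num
  have hfin : volume (Icc ℓ (ℓ + 1) ×ˢ Icc (-(1 / 2) : ℝ) (1 / 2)) ≠ ⊤ :=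
    (isCompact_Icc.prod isCompact_Icc).measure_ne_top
  refine (sqrt_setIntegral_sq_le hfin (by positivity) hsup).trans_eq ?_
  rw [hvolD, Real.sqrt_one, Real.mul_rpow (Real.sqrt_nonneg _) (Real.sqrt_nonneg _)]
  ring

end Rectangles

/-- **L² propagation of smallness for `-Δφ + V(x)φ = 0` with Neumann condition on `{y = 0}`.**
For `V` continuous, bounded, with `V ≥ 1`, and `ω ⊆ [ℓ, ℓ+1]` measurable with `|ω| = m > 0`,
there are `α ∈ (0,1)` and `C > 0`, depending only on `V` and `m`, such that every real-valued
`H²_loc` solution `φ` of `-Δφ + V(x)φ = 0` on `ℝ²` with `∂_y φ(x,0) = 0` satisfies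
`‖φ‖_{L²(D₁ℓ)} ≤ C ‖φ(·,0)‖_{L²(ω)}^α (sup_{D₂ℓ}|φ|)^{1-α}`,
where `D₁ℓ = [ℓ,ℓ+1] × [-1/2,1/2]` and `D₂ℓ = [ℓ-1,ℓ+2] × [-3/2,3/2]`. -/
theorem l2_propagation_neumann
    (V : ℝ → ℝ) (hVcont : Continuous V) (hVbdd : ∃ M : ℝ, ∀ x : ℝ, |V x| ≤ M)
    (hV1 : ∀ x : ℝ, 1 ≤ V x) (m : ℝ) (hm : 0 < m) :
    ∃ α : ℝ, α ∈ Ioo (0 : ℝ) 1 ∧ ∃ C > 0,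
      ∀ ℓ : ℤ, ∀ ω : Set ℝ, MeasurableSet ω → ω ⊆ Icc (ℓ : ℝ) ((ℓ : ℝ) + 1) →
        volume ω = ENNReal.ofReal m →
      ∀ φ : ℝ × ℝ → ℝ, ContDiff ℝ 2 φ →
        (∀ x y : ℝ,
          -(deriv (deriv (fun s => φ (s, y))) x + deriv (deriv (fun s => φ (x, s))) y)
            + V x * φ (x, y) = 0) →
        (∀ x : ℝ, deriv (fun s => φ (x, s)) 0 = 0) →
        Real.sqrt (∫ z in Icc (ℓ : ℝ) ((ℓ : ℝ) + 1) ×ˢ Icc (-(1/2) : ℝ) (1/2), (φ z) ^ 2) ≤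
          C * Real.sqrt (∫ x in ω, (φ (x, 0)) ^ 2) ^ α *
            (⨆ z ∈ (Icc ((ℓ : ℝ) - 1) ((ℓ : ℝ) + 2) ×ˢ Icc (-(3/2) : ℝ) (3/2)), |φ z|)
              ^ (1 - α) := by
  obtain ⟨M, hM⟩ := hVbdd
  obtain ⟨α, hα, C, hC, hprop⟩ :=
    l2_propagation_neumann_general ((abs_nonneg _).trans (hM 0)) hm
  exact ⟨α, hα, C, hC, fun ℓ ω _ hω hvol => hprop V hVcont
    (fun x => ⟨zero_le_one.trans (hV1 x), (le_abs_self _).trans (hM x)⟩) ℓ ω hω hvol.ge⟩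
end

section
/- Let 0 < ζ < 1. Then there exists a constant c > 0, depending only on ζ, such that for every measurable set ω ⊂ (0,1) with ζ ≤ |ω| ≤ 1 and every λ > 1, one has inf_{x₀ ∈ ℝ} ∫_ω cos²(λ(x − x₀)) dx ≥ c. -/
open MeasureTheory Set

/-!
If `ω` lies in an interval of length `L`, the part of `ω` where `|cos (λ (x - x₀))| < δ` has measure
at most `(L + π / λ) δ`: by Jordan's inequality the sublevel set occupies at most the proportion `δ`
of each period, and at most `λ L / π + 1` periods are needed to cover the interval. Choosing `δ` so
that this bound is `|ω| / 2`, Markov's inequality gives `∫_ω cos² (λ (x - x₀)) ≥ δ² |ω| / 2`.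
-/

theorem mul_measureReal_sub_le_integral {α : Type*} [MeasurableSpace α] {μ : Measure α}
    [IsFiniteMeasure μ] {f : α → ℝ} (hf_nonneg : 0 ≤ᵐ[μ] f) (hf : Integrable f μ)
    {ε : ℝ} (hε : 0 ≤ ε) :
    ε * (μ.real univ - μ.real {x | f x < ε}) ≤ ∫ x, f x ∂μ := by
  have h_cover : μ.real univ ≤ μ.real {x | ε ≤ f x} + μ.real {x | f x < ε} := by
    have h_union : {x | ε ≤ f x} ∪ {x | f x < ε} = univ :=
      eq_univ_of_forall fun x ↦ le_or_gt ε (f x)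
    rw [← h_union]
    exact measureReal_union_le _ _
  calc ε * (μ.real univ - μ.real {x | f x < ε})
      ≤ ε * μ.real {x | ε ≤ f x} := by gcongr; linarith
    _ ≤ ∫ x, f x ∂μ := mul_meas_ge_le_integral_of_nonneg hf_nonneg hf ε

theorem intervalIntegral_le_of_periodic {f : ℝ → ℝ} {T : ℝ} (hf : Function.Periodic f T)
    (hT : 0 < T) (hf_nonneg : 0 ≤ f)
    (hf_int : ∀ a b, IntervalIntegrable f volume a b) {a b : ℝ} (hab : a ≤ b) (t : ℝ) :
    ∫ x in a..b, f x ≤ ((b - a) / T + 1) * ∫ x in t..t + T, f x := by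
  set n : ℤ := ⌈(b - a) / T⌉
  have hb : b ≤ a + n • T := by
    have := (div_le_iff₀ hT).1 (Int.le_ceil ((b - a) / T))
    rw [zsmul_eq_mul]
    linarith
  calc ∫ x in a..b, f x
      ≤ ∫ x in a..a + n • T, f x :=
        intervalIntegral.integral_mono_interval le_rfl hab hb (.of_forall hf_nonneg) (hf_int _ _)
    _ = n * ∫ x in t..t + T, f x := by
        rw [hf.intervalIntegral_add_zsmul_eq n a hf_int, hf.intervalIntegral_add_eq a t,
          zsmul_eq_mul]
    _ ≤ ((b - a) / T + 1) * ∫ x in t..t + T, f x := by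
        gcongr
        · exact intervalIntegral.integral_nonneg (by linarith) fun x _ ↦ hf_nonneg x
        · exact (Int.ceil_lt_add_one _).le

theorem volume_real_inter_Icc_le_of_periodic {S : Set ℝ} {T : ℝ} (hS : MeasurableSet S)
    (hS_per : ∀ x, x + T ∈ S ↔ x ∈ S) (hT : 0 < T) {a b : ℝ} (hab : a ≤ b) (t : ℝ) :
    volume.real (S ∩ Icc a b) ≤ ((b - a) / T + 1) * volume.real (S ∩ Icc t (t + T)) := by
  have h_per : Function.Periodic (S.indicator (1 : ℝ → ℝ)) T := fun x ↦ by
    classical simp only [indicator_apply, hS_per x, Pi.one_apply]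
  have h_int (c d : ℝ) : IntervalIntegrable (S.indicator (1 : ℝ → ℝ)) volume c d :=
    ⟨(integrable_const 1).indicator hS, (integrable_const 1).indicator hS⟩
  have h_integral {c d : ℝ} (hcd : c ≤ d) :
      ∫ x in c..d, S.indicator (1 : ℝ → ℝ) x = volume.real (S ∩ Icc c d) := by
    rw [intervalIntegral.integral_of_le hcd, ← integral_Icc_eq_integral_Ioc,
      integral_indicator_one hS, measureReal_restrict_apply hS]
  rw [← h_integral hab, ← h_integral (by linarith : t ≤ t + T)]
  exact intervalIntegral_le_of_periodic h_per hT
    (indicator_nonneg fun _ _ ↦ zero_le_one) h_int hab t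

section CosSq

open Real

theorem two_div_pi_mul_abs_sub_le_abs_cos {y : ℝ} (hy : y ∈ Icc 0 π) :
    2 / π * |y - π / 2| ≤ |cos y| := by
  rw [abs_sub_comm, ← sin_pi_div_two_sub]
  exact mul_abs_le_abs_sin (abs_le.2 ⟨by linarith [hy.2], by linarith [hy.1]⟩)

theorem volume_real_cos_sq_lt_inter_period_le {lam δ : ℝ} (hlam : 0 < lam) (hδ : 0 ≤ δ) (x₀ : ℝ) :
    volume.real ({x | cos (lam * (x - x₀)) ^ 2 < δ ^ 2} ∩ Icc x₀ (x₀ + π / lam))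
      ≤ δ * (π / lam) := by
  have h_subset : {x | cos (lam * (x - x₀)) ^ 2 < δ ^ 2} ∩ Icc x₀ (x₀ + π / lam)
      ⊆ Metric.ball (x₀ + π / lam / 2) (δ * (π / lam) / 2) := by
    rintro x ⟨hcos, hx₀, hx⟩
    have hy : lam * (x - x₀) ∈ Icc 0 π :=
      ⟨mul_nonneg hlam.le (sub_nonneg.2 hx₀), by
        rw [mul_comm, ← le_div_iff₀ hlam]
        linarith⟩
    have h_center : lam * (x - x₀) - π / 2 = lam * (x - (x₀ + π / lam / 2)) := by
      field_simp
      ring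
    have h_lt : 2 / π * (lam * |x - (x₀ + π / lam / 2)|) < δ := by
      calc 2 / π * (lam * |x - (x₀ + π / lam / 2)|)
          = 2 / π * |lam * (x - x₀) - π / 2| := by
            rw [h_center, abs_mul, abs_of_pos hlam]
        _ ≤ |cos (lam * (x - x₀))| := two_div_pi_mul_abs_sub_le_abs_cos hy
        _ < δ := abs_lt_of_sq_lt_sq hcos hδ
    rw [Metric.mem_ball, Real.dist_eq]
    have := pi_pos
    field_simp at h_lt ⊢
    linarith
  calc volume.real ({x | cos (lam * (x - x₀)) ^ 2 < δ ^ 2} ∩ Icc x₀ (x₀ + π / lam))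
      ≤ volume.real (Metric.ball (x₀ + π / lam / 2) (δ * (π / lam) / 2)) :=
        measureReal_mono h_subset
    _ = δ * (π / lam) := by
        rw [Real.volume_real_ball (by positivity)]
        ring

theorem measurableSet_cos_sq_lt (lam x₀ ε : ℝ) :
    MeasurableSet {x | cos (lam * (x - x₀)) ^ 2 < ε} :=
  measurableSet_lt (by fun_prop) measurable_const

theorem volume_real_cos_sq_lt_inter_Icc_le {a b lam δ : ℝ} (hab : a ≤ b) (hlam : 0 < lam)
    (hδ : 0 ≤ δ) (x₀ : ℝ) :
    volume.real ({x | cos (lam * (x - x₀)) ^ 2 < δ ^ 2} ∩ Icc a b)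
      ≤ (b - a + π / lam) * δ := by
  have hT : 0 < π / lam := by positivity
  have h_per (x : ℝ) : x + π / lam ∈ {x | cos (lam * (x - x₀)) ^ 2 < δ ^ 2} ↔
      x ∈ {x | cos (lam * (x - x₀)) ^ 2 < δ ^ 2} := by
    have h_shift : lam * (x + π / lam - x₀) = lam * (x - x₀) + π := by
      field_simp
      ring
    simp only [mem_ofPred_eq, h_shift, cos_add_pi, neg_sq]
  calc volume.real ({x | cos (lam * (x - x₀)) ^ 2 < δ ^ 2} ∩ Icc a b)
      ≤ ((b - a) / (π / lam) + 1) * volume.real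
          ({x | cos (lam * (x - x₀)) ^ 2 < δ ^ 2} ∩ Icc x₀ (x₀ + π / lam)) :=
        volume_real_inter_Icc_le_of_periodic (measurableSet_cos_sq_lt lam x₀ _) h_per hT hab x₀
    _ ≤ ((b - a) / (π / lam) + 1) * (δ * (π / lam)) := by
        have := sub_nonneg.2 hab
        gcongr
        exact volume_real_cos_sq_lt_inter_period_le hlam hδ x₀
    _ = (b - a + π / lam) * δ := by
        field_simp

theorem measureReal_pow_three_div_le_setIntegral_cos_sq {ω : Set ℝ} {a b lam : ℝ}
    (hω : ω ⊆ Icc a b) (hlam : 0 < lam) (x₀ : ℝ) :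
    volume.real ω ^ 3 / (8 * (b - a + π / lam) ^ 2)
      ≤ ∫ x in ω, cos (lam * (x - x₀)) ^ 2 := by
  obtain rfl | ⟨x, hx⟩ := ω.eq_empty_or_nonempty
  · simp
  have hab : a ≤ b := (hω hx).1.trans (hω hx).2
  set f : ℝ → ℝ := fun x ↦ cos (lam * (x - x₀)) ^ 2
  set K := b - a + π / lam
  have hK : 0 < K := add_pos_of_nonneg_of_pos (sub_nonneg.2 hab) (by positivity)
  set δ := volume.real ω / (2 * K)
  have hδ : 0 ≤ δ := by positivity
  have : IsFiniteMeasure (volume.restrict ω) :=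
    isFiniteMeasure_restrict.2 (measure_ne_top_of_subset hω measure_Icc_lt_top.ne)
  have hf_int : IntegrableOn f ω :=
    (Continuous.integrableOn_Icc (by fun_prop)).mono_set hω
  have h_small : (volume.restrict ω).real {x | f x < δ ^ 2} ≤ volume.real ω / 2 :=
    calc (volume.restrict ω).real {x | f x < δ ^ 2}
        = volume.real ({x | f x < δ ^ 2} ∩ ω) :=
          measureReal_restrict_apply (measurableSet_cos_sq_lt lam x₀ _)
      _ ≤ volume.real ({x | f x < δ ^ 2} ∩ Icc a b) :=
          measureReal_mono (inter_subset_inter_right _ hω)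
            (measure_ne_top_of_subset inter_subset_right measure_Icc_lt_top.ne)
      _ ≤ K * δ := volume_real_cos_sq_lt_inter_Icc_le hab hlam hδ x₀
      _ = volume.real ω / 2 := by simp only [δ]; field_simp
  calc volume.real ω ^ 3 / (8 * K ^ 2)
      = δ ^ 2 * (volume.real ω - volume.real ω / 2) := by simp only [δ]; field_simp; ring
    _ ≤ δ ^ 2 * ((volume.restrict ω).real univ - (volume.restrict ω).real {x | f x < δ ^ 2}) := by
        rw [measureReal_restrict_apply_univ]
        gcongr
    _ ≤ ∫ x in ω, f x :=
        mul_measureReal_sub_le_integral (.of_forall fun _ ↦ sq_nonneg _) hf_int (sq_nonneg δ)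

theorem cos_sq_average_lower_bound_general {ω : Set ℝ} {a b ζ κ lam : ℝ} (hζ : 0 < ζ)
    (hω : ω ⊆ Icc a b) (hζω : ENNReal.ofReal ζ ≤ volume ω) (hκ : 0 < κ) (hlam : κ ≤ lam) (x₀ : ℝ) :
    ζ ^ 3 / (8 * (b - a + π / κ) ^ 2) ≤ ∫ x in ω, cos (lam * (x - x₀)) ^ 2 := by
  have hζ_le : ζ ≤ volume.real ω :=
    (ENNReal.ofReal_le_iff_le_toReal (measure_ne_top_of_subset hω measure_Icc_lt_top.ne)).1 hζω
  obtain ⟨x, hx⟩ : ω.Nonempty :=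
    nonempty_of_measureReal_ne_zero (hζ.trans_le hζ_le).ne'
  have hab : 0 ≤ b - a := sub_nonneg.2 ((hω hx).1.trans (hω hx).2)
  have hlam_pos : 0 < lam := hκ.trans_le hlam
  calc ζ ^ 3 / (8 * (b - a + π / κ) ^ 2)
      ≤ volume.real ω ^ 3 / (8 * (b - a + π / lam) ^ 2) := by gcongr
    _ ≤ ∫ x in ω, cos (lam * (x - x₀)) ^ 2 :=
        measureReal_pow_three_div_le_setIntegral_cos_sq hω hlam_pos x₀

end CosSq

/-- **A quantitative lower bound for averages of `cos²` over measurable sets.**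
For `0 < ζ < 1` there is `c > 0`, depending only on `ζ`, such that for every
measurable `ω ⊆ (0,1)` with `ζ ≤ |ω| ≤ 1` and every `λ > 1`,
`inf_{x₀ ∈ ℝ} ∫_ω cos²(λ(x - x₀)) dx ≥ c`. -/
theorem cos_sq_average_lower_bound
    (ζ : ℝ) (hζ0 : 0 < ζ) (hζ1 : ζ < 1) :
    ∃ c > 0, ∀ ω : Set ℝ, MeasurableSet ω → ω ⊆ Ioo (0 : ℝ) 1 →
      ENNReal.ofReal ζ ≤ volume ω → volume ω ≤ 1 →
      ∀ lam : ℝ, 1 < lam → ∀ x₀ : ℝ,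
        c ≤ ∫ x in ω, Real.cos (lam * (x - x₀)) ^ 2 := by
  refine ⟨ζ ^ 3 / (8 * (1 + Real.pi) ^ 2), by positivity, fun ω _ hω hζω _ lam hlam x₀ ↦ ?_⟩
  simpa only [sub_zero, div_one] using cos_sq_average_lower_bound_general
    hζ0 (hω.trans Ioo_subset_Icc_self) hζω one_pos hlam.le x₀
end
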